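/- Let n ≥ 2. For each j = 1, …, n let T_{j,1}, …, T_{j,A(j)} be finitely many unit cylinders in ℝ^n with core directions v_{j,a}, and assume that for every choice of indices a_1, …, a_n the determinant of the matrix with columns v_{1,a_1}, …, v_{n,a_n} has absolute value at least θ > 0. Let I be the set of points of ℝ^n that belong to at least one cylinder T_{j,a} for each j = 1, …, n. Then Vol(I) ≤ C(n) θ^{-1/(n-1)} ∏_{j=1}^n A(j)^{1/(n-1)}, where C(n) depends only on n. -/

import Mathlib

open MeasureTheory
open scoped ENNReal

/-- The cylinder of radius `r` around the line through `p` with direction `v`. -/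
noncomputable def cylinder {n : ℕ} (p v : EuclideanSpace ℝ (Fin n)) (r : ℝ) :
    Set (EuclideanSpace ℝ (Fin n)) :=
  {x | Metric.infDist x {y | ∃ t : ℝ, y = p + t • v} ≤ r}

open Module NormedSpace
open scoped RealInnerProductSpace Function Topology

/-!
The polynomial method of Guth, in an averaged form. Cut `I` into pieces `C a`, one for each choice
`a` of a cylinder in every direction, approximate them by disjoint compact sets, and attach to each
point of `C a` a small box with edges along the directions `v j (a j)`.

Bring the vector of monomials of degree at most `d` in each variable into approximately isotropic
position on a neighbourhood of `I` (a near-minimiser of the Barthe-Forster functional). A random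
Gaussian polynomial in these coordinates then changes sign between two random points of a box with
probability at least `1/32`, as soon as the volume of the box times `(d + 1) ^ n` exceeds a multiple
of `Vol(I)`. On the other hand, a sign change between two points of a box produces one along an edge
of the box, and a polynomial of degree `D` changes sign only `D` times along a line. Integrating
over the lines of a cylinder bounds the volume of the pieces with a sign change by the degree times
the edge lengths. Comparing the two estimates gives `Vol(I) ^ n ≤ K * Vol(I)`.
-/

section SignChanges

/-- `a` and `b` lie on different sides of `0`, where `0` itself counts as negative; with this
convention a sign change from `a` to `c` occurs between `a` and `b` or between `b` and `c`. -/
def SignChange (a b : ℝ) : Prop := ¬(0 < a ↔ 0 < b)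

lemma SignChange.trans_or {a b c : ℝ} (h : SignChange a c) :
    SignChange a b ∨ SignChange b c := by
  unfold SignChange at *
  tauto

lemma SignChange.zero_mem_uIcc {a b : ℝ} (h : SignChange a b) : (0 : ℝ) ∈ Set.uIcc a b := by
  unfold SignChange at h
  grind [Set.mem_uIcc]

lemma signChange_mul_iff {r s a b : ℝ} (hr : 0 < r) (hs : 0 < s) :
    SignChange (r * a) (s * b) ↔ SignChange a b := by
  simp only [SignChange, mul_pos_iff_of_pos_left, hr, hs]

lemma measurableSet_signChange {X : Type*} [MeasurableSpace X] {f g : X → ℝ}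
    (hf : Measurable f) (hg : Measurable g) : MeasurableSet {x | SignChange (f x) (g x)} :=
  ((measurableSet_lt measurable_const hf).iff (measurableSet_lt measurable_const hg)).compl

open Polynomial in
lemma volume_signChange_shift_le (P : ℝ[X]) (s : ℝ) :
    volume {t | SignChange (P.eval t) (P.eval (t + s))} ≤ P.natDegree * ENNReal.ofReal |s| := by
  have near_root : {t | SignChange (P.eval t) (P.eval (t + s))} ⊆
      ⋃ r ∈ P.roots.toFinset, Set.uIcc (r - s) r := by
    intro t ht
    have hP : P ≠ 0 := by
      rintro rfl
      simp [SignChange] at ht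
    obtain ⟨r, hr, hr0⟩ := intermediate_value_uIcc P.continuous.continuousOn ht.zero_mem_uIcc
    simp only [Set.mem_iUnion]
    refine ⟨r, by simpa [mem_roots hP] using hr0, ?_⟩
    grind [Set.mem_uIcc]
  calc volume {t | SignChange (P.eval t) (P.eval (t + s))}
      ≤ ∑ r ∈ P.roots.toFinset, volume (Set.uIcc (r - s) r) :=
        (measure_mono near_root).trans (measure_biUnion_finset_le _ _)
    _ = P.roots.toFinset.card * ENNReal.ofReal |s| := by
        simp [Real.volume_interval]
    _ ≤ P.natDegree * ENNReal.ofReal |s| := by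
        gcongr
        exact (Multiset.toFinset_card_le _).trans P.card_roots'

end SignChanges

section PolynomialsOnLines

open Polynomial

variable {σ : Type*} (P : MvPolynomial σ ℝ) (x v : σ → ℝ)

/-- The univariate polynomial `t ↦ P (x + t • v)`. -/
noncomputable def lineRestriction : ℝ[X] :=
  MvPolynomial.aeval (fun i => C (x i) + C (v i) * X) P

@[simp]
lemma eval_lineRestriction (t : ℝ) :
    (lineRestriction P x v).eval t = MvPolynomial.eval (x + t • v) P := by
  simp [lineRestriction, MvPolynomial.aeval_def, MvPolynomial.eval₂_eq, MvPolynomial.eval_eq,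
    eval_finsetSum, eval_prod, mul_comm t]

lemma natDegree_lineRestriction_le : (lineRestriction P x v).natDegree ≤ P.totalDegree := by
  have linear (i : σ) : (C (x i) + C (v i) * X).natDegree ≤ 1 := by compute_degree
  exact (MvPolynomial.aeval_natDegree_le P le_rfl _ linear).trans (mul_one _).le

lemma volume_signChange_line_le (s : ℝ) :
    volume {t : ℝ | SignChange (MvPolynomial.eval (x + t • v) P)
      (MvPolynomial.eval (x + t • v + s • v) P)} ≤ P.totalDegree * ENNReal.ofReal |s| := by
  have h := volume_signChange_shift_le (lineRestriction P x v) s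
  simp only [eval_lineRestriction, add_smul, ← add_assoc] at h
  refine h.trans ?_
  gcongr
  exact natDegree_lineRestriction_le P x v

end PolynomialsOnLines

section Tubes

variable {F : Type*} [NormedAddCommGroup F] [NormedSpace ℝ F]

lemma measure_inter_le_of_line_measure_le [MeasurableSpace F] [BorelSpace F]
    [SecondCountableTopology F] (μ : Measure F) [SFinite μ] [μ.IsAddRightInvariant] (v : F)
    {U S B : Set F} {c : ℝ≥0∞}
    (hS : MeasurableSet S) (hB : MeasurableSet B)
    (hU : ∀ z ∈ U, 1 ≤ volume {t : ℝ | z - t • v ∈ B})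
    (hc : ∀ y, volume {t : ℝ | y + t • v ∈ S} ≤ c) : μ (U ∩ S) ≤ c * μ B := by
  have hQ : MeasurableSet {q : F × ℝ | q.1 ∈ S ∧ q.1 - q.2 • v ∈ B} :=
    (measurable_fst hS).inter ((by fun_prop : Measurable fun q : F × ℝ => q.1 - q.2 • v) hB)
  have hQ' : MeasurableSet {q : F × ℝ | q.1 ∈ B ∧ q.1 + q.2 • v ∈ S} :=
    (measurable_fst hB).inter ((by fun_prop : Measurable fun q : F × ℝ => q.1 + q.2 • v) hS)
  calc μ (U ∩ S) ≤ μ {z | 1 ≤ volume {t : ℝ | z ∈ S ∧ z - t • v ∈ B}} := by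
        refine measure_mono fun z hz => ?_
        simpa [hz.2] using hU z hz.1
    _ ≤ ∫⁻ z, volume {t : ℝ | z ∈ S ∧ z - t • v ∈ B} ∂μ := by
        simpa using mul_meas_ge_le_lintegral (measurable_measure_prodMk_left hQ) 1
    _ = ∫⁻ t : ℝ, μ {z | z ∈ S ∧ z - t • v ∈ B} :=
        (Measure.prod_apply hQ).symm.trans (Measure.prod_apply_symm hQ)
    _ = ∫⁻ t : ℝ, μ {y | y ∈ B ∧ y + t • v ∈ S} := by
        refine lintegral_congr fun t => ?_
        rw [← measure_preimage_add_right μ (t • v)]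
        simp [and_comm]
    _ = ∫⁻ y, volume {t : ℝ | y ∈ B ∧ y + t • v ∈ S} ∂μ :=
        (Measure.prod_apply_symm hQ').symm.trans (Measure.prod_apply hQ')
    _ ≤ ∫⁻ y, B.indicator (fun _ => c) y ∂μ := by
        refine lintegral_mono fun y => ?_
        by_cases hy : y ∈ B <;> simp [hy, hc]
    _ = c * μ B := lintegral_indicator_const hB c

lemma one_le_volume_line_inter_closedBall {p v z : F} {R t₀ : ℝ} (hv : ‖v‖ ≤ 1)
    (hz : ‖z - (p + t₀ • v)‖ ≤ R) :
    1 ≤ volume {t : ℝ | z - t • v ∈ Metric.closedBall p (R + 1)} := by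
  have unit_interval : Set.Icc t₀ (t₀ + 1) ⊆ {t : ℝ | z - t • v ∈ Metric.closedBall p (R + 1)} := by
    intro t ht
    have split : z - t • v - p = (z - (p + t₀ • v)) - (t - t₀) • v := by module
    have step : ‖(t - t₀) • v‖ ≤ 1 := by
      rw [norm_smul, Real.norm_eq_abs, abs_of_nonneg (by linarith [ht.1])]
      nlinarith [ht.1, ht.2, norm_nonneg v]
    rw [Set.mem_ofPred_eq, mem_closedBall_iff_norm, split]
    exact (norm_sub_le _ _).trans (add_le_add hz step)
  simpa using measure_mono (μ := volume) unit_interval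

lemma volume_inter_signChange_shift_le {σ : Type*} [Fintype σ] (P : MvPolynomial σ ℝ)
    {p v : σ → ℝ} (hv : ‖v‖ ≤ 1) (s : ℝ) {R : ℝ} (hR : 0 ≤ R) {U : Set (σ → ℝ)}
    (hU : ∀ z ∈ U, ∃ t : ℝ, ‖z - (p + t • v)‖ ≤ R) :
    volume (U ∩ {z | SignChange (MvPolynomial.eval z P) (MvPolynomial.eval (z + s • v) P)}) ≤
      ENNReal.ofReal ((2 * (R + 1)) ^ Fintype.card σ * (P.totalDegree * |s|)) := by
  have hP : Measurable fun z => MvPolynomial.eval z P := P.continuous_eval.measurable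
  calc _ ≤ P.totalDegree * ENNReal.ofReal |s| * volume (Metric.closedBall p (R + 1)) :=
        measure_inter_le_of_line_measure_le volume v
          (measurableSet_signChange hP (hP.comp (measurable_id.add_const _)))
          Metric.isClosed_closedBall.measurableSet
          (fun z hz => (hU z hz).elim fun _ => one_le_volume_line_inter_closedBall hv)
          fun y => volume_signChange_line_le P y v s
    _ = _ := by
        rw [Real.volume_pi_closedBall _ (by linarith), ← ENNReal.ofReal_natCast,
          ← ENNReal.ofReal_mul (by positivity), ← ENNReal.ofReal_mul (by positivity), mul_comm]

end Tubes

section OperatorDeterminant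

variable {E : Type*} [NormedAddCommGroup E] [InnerProductSpace ℝ E] [FiniteDimensional ℝ E]

lemma abs_det_le_norm_pow_mul_norm_apply (T : E →L[ℝ] E) {v : E} (hv : ‖v‖ = 1) :
    |T.det| ≤ ‖T‖ ^ (finrank ℝ E - 1) * ‖T v‖ := by
  have hv0 : v ≠ 0 := by
    rintro rfl
    simp at hv
  have : Nontrivial E := ⟨⟨v, 0, hv0⟩⟩
  obtain ⟨k, hk⟩ := Nat.exists_eq_succ_of_ne_zero (finrank_pos (R := ℝ) (M := E)).ne'
  have : Fact (finrank ℝ E = k + 1) := ⟨hk⟩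
  obtain ⟨b, hb⟩ := Orthonormal.exists_orthonormalBasis_extension_of_card_eq (𝕜 := ℝ)
    (ι := Fin (k + 1)) (by simpa using hk) (v := fun _ => v) (s := {0})
    (by simp [Set.domRestrict, hv])
  have hb0 : b 0 = v := hb 0 rfl
  have det_eq : T.det = b.toBasis.det (T ∘ b) := by
    have h := b.toBasis.det_comp (T : E →ₗ[ℝ] E) b.toBasis
    rw [b.toBasis.det_self, mul_one, b.coe_toBasis] at h
    exact h.symm
  calc |T.det| = |b.toBasis.orientation.volumeForm (T ∘ b)| := by
        rw [det_eq, Orientation.volumeForm_robust']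
    _ ≤ ∏ i, ‖T (b i)‖ := Orientation.abs_volumeForm_apply_le _ _
    _ = ‖T v‖ * ∏ i : Fin k, ‖T (b i.succ)‖ := by rw [Fin.prod_univ_succ, hb0]
    _ ≤ ‖T v‖ * ∏ _ : Fin k, ‖T‖ := by
        gcongr with i
        simpa using T.le_opNorm (b i.succ)
    _ = ‖T‖ ^ (finrank ℝ E - 1) * ‖T v‖ := by simp [hk, mul_comm]

lemma apply_ne_zero_of_det_ne_zero {T : E →L[ℝ] E} (hT : T.det ≠ 0) {v : E} (hv : v ≠ 0) :
    T v ≠ 0 :=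
  ((LinearMap.equivOfDetNeZero _ hT).map_ne_zero_iff).2 hv

omit [FiniteDimensional ℝ E] in
lemma det_comp (S T : E →L[ℝ] E) : (S ∘L T).det = S.det * T.det := LinearMap.det_comp _ _

omit [FiniteDimensional ℝ E] in
lemma det_comp_ne_zero {S T : E →L[ℝ] E} (hS : S.det ≠ 0) (hT : T.det ≠ 0) :
    (S ∘L T).det ≠ 0 := by
  rw [det_comp]
  exact mul_ne_zero hS hT

lemma log_norm_comp_ratio {S T : E →L[ℝ] E} (hS : S.det ≠ 0) (hT : T.det ≠ 0) {v : E}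
    (hv : v ≠ 0) :
    Real.log (‖S (T v)‖ / ‖T v‖) = Real.log ‖(S ∘L T) v‖ - Real.log ‖T v‖ :=
  have hTv := apply_ne_zero_of_det_ne_zero hT hv
  Real.log_div (norm_ne_zero_iff.2 (apply_ne_zero_of_det_ne_zero hS hTv)) (norm_ne_zero_iff.2 hTv)

omit [FiniteDimensional ℝ E] in
lemma norm_normalize_le_one (v : E) : ‖(normalize v : E)‖ ≤ 1 := by
  rcases eq_or_ne v 0 with rfl | hv
  · simp
  · exact (norm_normalize_eq_one_iff.2 hv).le

lemma ne_zero_of_det_ne_zero [Nontrivial E] {T : E →L[ℝ] E} (hT : T.det ≠ 0) : T ≠ 0 := by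
  rintro rfl
  exact hT (by simp [ContinuousLinearMap.det])

lemma exists_norm_eq_one_half_norm_mul_le {T : E →L[ℝ] E} (hT : T ≠ 0) :
    ∃ w : E, ‖w‖ = 1 ∧ ∀ v, ‖T‖ / 2 * |⟪w, v⟫| ≤ ‖T v‖ := by
  have hT0 : 0 < ‖T‖ := norm_pos_iff.2 hT
  obtain ⟨y, hy1, hy⟩ := T.adjoint.exists_lt_apply_of_lt_opNorm (r := ‖T‖ / 2)
    (by rw [LinearIsometryEquiv.norm_map]; linarith)
  have hy0 : T.adjoint y ≠ 0 := norm_pos_iff.1 (by linarith)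
  refine ⟨normalize (T.adjoint y), norm_normalize_eq_one_iff.2 hy0, fun v => ?_⟩
  calc ‖T‖ / 2 * |⟪normalize (T.adjoint y), v⟫|
      ≤ ‖T.adjoint y‖ * |⟪normalize (T.adjoint y), v⟫| := by gcongr
    _ = |⟪y, T v⟫| := by
        rw [← T.adjoint_inner_left, ← abs_norm (T.adjoint y), ← abs_mul, ← real_inner_smul_left,
          norm_smul_normalize]
    _ ≤ ‖y‖ * ‖T v‖ := abs_real_inner_le_norm _ _
    _ ≤ ‖T v‖ := mul_le_of_le_one_left (norm_nonneg _) hy1.le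

lemma log_abs_det_le {T : E →L[ℝ] E} (hT : T.det ≠ 0) {v : E} (hv : ‖v‖ = 1) :
    Real.log |T.det| ≤ (finrank ℝ E - 1) * Real.log ‖T‖ + Real.log ‖T v‖ := by
  have hv0 : v ≠ 0 := by simp [← norm_ne_zero_iff, hv]
  have hTv := norm_pos_iff.2 (apply_ne_zero_of_det_ne_zero hT hv0)
  have : Nontrivial E := ⟨⟨v, 0, hv0⟩⟩
  have hT0 := norm_pos_iff.2 (ne_zero_of_det_ne_zero hT)
  have h := Real.log_le_log (abs_pos.2 hT) (abs_det_le_norm_pow_mul_norm_apply T hv)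
  rwa [Real.log_mul (by positivity) hTv.ne', Real.log_pow, Nat.cast_sub finrank_pos,
    Nat.cast_one] at h

lemma log_abs_det_le_finrank_mul [Nontrivial E] {T : E →L[ℝ] E} (hT : T.det ≠ 0) :
    Real.log |T.det| ≤ finrank ℝ E * Real.log ‖T‖ := by
  obtain ⟨v, hv⟩ := exists_norm_eq E zero_le_one
  have hv0 : v ≠ 0 := by simp [← norm_ne_zero_iff, hv]
  have hTv := norm_pos_iff.2 (apply_ne_zero_of_det_ne_zero hT hv0)
  have := Real.log_le_log hTv (T.le_of_opNorm_le_of_le le_rfl hv.le)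
  linarith [log_abs_det_le hT hv, mul_one ‖T‖ ▸ this]

lemma log_le_log_norm_apply {T : E →L[ℝ] E} (hT : T.det ≠ 0) {v w : E} (hv : ‖v‖ = 1)
    (hw : ‖T‖ / 2 * |⟪w, v⟫| ≤ ‖T v‖) {δ : ℝ} (hδ : 0 < δ) (hδ1 : δ ≤ 1) :
    Real.log (δ / 2) + Real.log ‖T‖ +
      (if |⟪w, v⟫| < δ then Real.log |T.det| - finrank ℝ E * Real.log ‖T‖ else 0) ≤
        Real.log ‖T v‖ := by
  have hv0 : v ≠ 0 := by simp [← norm_ne_zero_iff, hv]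
  have : Nontrivial E := ⟨⟨v, 0, hv0⟩⟩
  have hT0 := norm_pos_iff.2 (ne_zero_of_det_ne_zero hT)
  split_ifs with hvw
  · have := Real.log_nonpos (by positivity) (by linarith : δ / 2 ≤ 1)
    linarith [log_abs_det_le hT hv]
  · rw [add_zero, ← Real.log_mul (by positivity) hT0.ne']
    refine Real.log_le_log (by positivity) (le_trans ?_ hw)
    nlinarith [not_lt.1 hvw]

/-- The self-adjoint operator which, for a unit vector `c`, halves the component along `c` and
fixes the orthogonal complement of `c`. -/
noncomputable def halveAlong (c : E) : E →L[ℝ] E :=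
  ContinuousLinearMap.id ℝ E - (2⁻¹ : ℝ) • (innerSL ℝ c).smulRight c

omit [FiniteDimensional ℝ E] in
lemma halveAlong_apply (c v : E) : halveAlong c v = v - (2⁻¹ * ⟪c, v⟫) • c := by
  simp [halveAlong, smul_smul]

lemma det_halveAlong {c : E} (hc : ‖c‖ = 1) : (halveAlong c).det = 2⁻¹ := by
  have transvection : (halveAlong c : E →ₗ[ℝ] E) =
      LinearMap.transvection (-(2⁻¹ : ℝ) • (innerSL ℝ c : E →ₗ[ℝ] ℝ)) c := by
    ext v
    simp [halveAlong_apply, LinearMap.transvection, sub_eq_add_neg]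
  rw [ContinuousLinearMap.det, transvection, LinearMap.transvection.det]
  norm_num [hc]

omit [FiniteDimensional ℝ E] in
lemma norm_sq_halveAlong_apply {c : E} (hc : ‖c‖ = 1) (v : E) :
    ‖halveAlong c v‖ ^ 2 = ‖v‖ ^ 2 - 3 / 4 * ⟪c, v⟫ ^ 2 := by
  rw [halveAlong_apply, norm_sub_sq_real, real_inner_smul_right, real_inner_comm, norm_smul, hc,
    Real.norm_eq_abs, mul_one, sq_abs]
  ring

lemma log_norm_halveAlong_ratio_le {c v : E} (hc : ‖c‖ = 1) :
    Real.log (‖halveAlong c v‖ / ‖v‖) ≤ -(3 / 8 * ⟪c, normalize v⟫ ^ 2) := by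
  rcases eq_or_ne v 0 with rfl | hv
  · simp
  have : 0 < ‖v‖ := norm_pos_iff.2 hv
  have ratio_sq : (‖halveAlong c v‖ / ‖v‖) ^ 2 = 1 - 3 / 4 * ⟪c, normalize v⟫ ^ 2 := by
    rw [div_pow, norm_sq_halveAlong_apply hc, NormedSpace.normalize, real_inner_smul_right]
    field_simp
  have hpos : 0 < (‖halveAlong c v‖ / ‖v‖) ^ 2 := by
    have := det_halveAlong hc
    have := apply_ne_zero_of_det_ne_zero (T := halveAlong c) (by rw [this]; norm_num) hv
    positivity
  have h := Real.log_le_sub_one_of_pos hpos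
  rw [Real.log_pow, ratio_sq] at h
  push_cast at h
  linarith

end OperatorDeterminant

section SmallBall

variable {E : Type*} [NormedAddCommGroup E] [InnerProductSpace ℝ E] [FiniteDimensional ℝ E]
  [MeasurableSpace E] [BorelSpace E]
variable {X : Type*} [MeasurableSpace X] {μ : Measure X} [IsFiniteMeasure μ] {u : X → E}

lemma exists_pos_measure_abs_inner_lt_le (hu : Measurable u) (hu1 : ∀ x, ‖u x‖ = 1)
    (hnull : ∀ w, w ≠ 0 → μ {x | ⟪w, u x⟫ = 0} = 0) {η : ℝ≥0∞} (hη : 0 < η) :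
    ∃ δ > 0, δ ≤ 1 ∧ ∀ w : E, ‖w‖ = 1 → μ {x | |⟪w, u x⟫| < δ} ≤ η := by
  have locally_small : ∀ w ∈ Metric.sphere (0 : E) 1,
      ∀ᶠ q : ℝ × E in 𝓝 (0, w), μ {x | |⟪q.2, u x⟫| < q.1} ≤ η := by
    intro w hw
    have meas (ε : ℝ) : NullMeasurableSet {x | |⟪w, u x⟫| < ε} μ :=
      (measurableSet_lt (by fun_prop) measurable_const).nullMeasurableSet
    have h := tendsto_measure_biInter_gt (μ := μ) (a := (0 : ℝ)) (fun ε _ => meas ε)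
      (fun _ _ _ hij x hx => lt_of_lt_of_le hx hij) ⟨1, one_pos, measure_ne_top _ _⟩
    have inter : ⋂ ε > (0 : ℝ), {x | |⟪w, u x⟫| < ε} = {x | ⟪w, u x⟫ = 0} := by
      ext x
      simp only [Set.mem_iInter, Set.mem_ofPred_eq]
      exact ⟨fun h => abs_nonpos_iff.1 (le_of_forall_gt_imp_ge_of_dense fun ε hε => (h ε hε).le),
        fun h ε hε => by simpa [h] using hε⟩
    rw [inter, hnull w (Metric.ne_of_mem_sphere hw one_ne_zero)] at h
    obtain ⟨ε, hε, hε0⟩ := ((h.eventually_lt_const hη).and self_mem_nhdsWithin).exists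
    have close : ∀ᶠ q : ℝ × E in 𝓝 (0, w), q.1 + ‖w - q.2‖ < ε := by
      refine (Continuous.tendsto' ?_ _ 0 (by simp)).eventually_lt_const hε0
      fun_prop
    filter_upwards [close] with q hq
    refine (measure_mono fun x hx => ?_).trans hε.le
    have := abs_real_inner_le_norm (w - q.2) (u x)
    rw [inner_sub_left, hu1, mul_one] at this
    have hx : |⟪q.2, u x⟫| < q.1 := hx
    change |⟪w, u x⟫| < ε
    have := abs_sub_abs_le_abs_sub ⟪w, u x⟫ ⟪q.2, u x⟫
    linarith
  have h := (isCompact_sphere (0 : E) 1).eventually_forall_of_forall_eventually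
    (P := fun (δ : ℝ) w => μ {x | |⟪w, u x⟫| < δ} ≤ η) locally_small
  obtain ⟨δ, hδ, hδ0, hδ1⟩ :=
    ((h.filter_mono nhdsWithin_le_nhds).and (Ioc_mem_nhdsGT one_pos)).exists
  exact ⟨δ, hδ0, hδ1, fun w hw => hδ w (by simpa using hw)⟩

end SmallBall

section RadialIsotropy

variable {E : Type*} [NormedAddCommGroup E] [InnerProductSpace ℝ E] [FiniteDimensional ℝ E]
  {X : Type*} [MeasurableSpace X] (μ : Measure X) (u : X → E)

/-- The scale invariant functional of `T` whose near-minimisers bring `u` into approximately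
isotropic position (Barthe, Forster). -/
noncomputable def isotropyPotential (T : E →L[ℝ] E) : ℝ :=
  ∫ x, Real.log ‖T (u x)‖ ∂μ - μ.real Set.univ / finrank ℝ E * Real.log |T.det|

variable [MeasurableSpace E] [BorelSpace E] {μ u} [IsFiniteMeasure μ]

lemma integrable_log_norm_apply (hu : Measurable u) (hu1 : ∀ x, ‖u x‖ = 1) {T : E →L[ℝ] E}
    (hT : T.det ≠ 0) : Integrable (fun x => Real.log ‖T (u x)‖) μ := by
  have cont : ContinuousOn (fun v => Real.log ‖T v‖) (Metric.sphere 0 1) :=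
    ContinuousOn.log (by fun_prop) fun v hv => norm_ne_zero_iff.2
      (apply_ne_zero_of_det_ne_zero hT (Metric.ne_of_mem_sphere hv one_ne_zero))
  obtain ⟨C, hC⟩ := (isCompact_sphere (0 : E) 1).exists_bound_of_continuousOn cont
  have meas : Measurable fun x => Real.log ‖T (u x)‖ := Real.measurable_log.comp (by fun_prop)
  exact Integrable.of_bound meas.aestronglyMeasurable C (.of_forall fun x => hC _ (by simp [hu1]))

lemma integrable_log_norm_comp_ratio (hu : Measurable u) (hu1 : ∀ x, ‖u x‖ = 1) {S T : E →L[ℝ] E}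
    (hS : S.det ≠ 0) (hT : T.det ≠ 0) :
    Integrable (fun x => Real.log (‖S (T (u x))‖ / ‖T (u x)‖)) μ := by
  have hu0 (x) : u x ≠ 0 := by simp [← norm_ne_zero_iff, hu1]
  simp only [log_norm_comp_ratio hS hT (hu0 _)]
  exact (integrable_log_norm_apply hu hu1 (det_comp_ne_zero hS hT)).sub
    (integrable_log_norm_apply hu hu1 hT)

lemma isotropyPotential_comp (hu : Measurable u) (hu1 : ∀ x, ‖u x‖ = 1) {S T : E →L[ℝ] E}
    (hS : S.det ≠ 0) (hT : T.det ≠ 0) :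
    isotropyPotential μ u (S ∘L T) = isotropyPotential μ u T +
      ∫ x, Real.log (‖S (T (u x))‖ / ‖T (u x)‖) ∂μ -
        μ.real Set.univ / finrank ℝ E * Real.log |S.det| := by
  have hu0 (x) : u x ≠ 0 := by simp [← norm_ne_zero_iff, hu1]
  simp only [isotropyPotential, log_norm_comp_ratio hS hT (hu0 _)]
  rw [integral_sub (integrable_log_norm_apply hu hu1 (det_comp_ne_zero hS hT))
    (integrable_log_norm_apply hu hu1 hT), det_comp, abs_mul,
    Real.log_mul (abs_ne_zero.2 hS) (abs_ne_zero.2 hT)]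
  ring

lemma exists_forall_le_isotropyPotential [Nontrivial E] [NeZero μ] (hu : Measurable u)
    (hu1 : ∀ x, ‖u x‖ = 1) (hnull : ∀ w, w ≠ 0 → μ {x | ⟪w, u x⟫ = 0} = 0) :
    ∃ b : ℝ, ∀ T : E →L[ℝ] E, T.det ≠ 0 → b ≤ isotropyPotential μ u T := by
  have hD : (0 : ℝ) < finrank ℝ E := Nat.cast_pos.2 finrank_pos
  set m := μ.real Set.univ with hm
  have hm0 : 0 < m := by simp [hm]
  obtain ⟨δ, hδ, hδ1, small⟩ := exists_pos_measure_abs_inner_lt_le hu hu1 hnull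
    (η := ENNReal.ofReal (m / finrank ℝ E)) (by positivity)
  refine ⟨m * Real.log (δ / 2), fun T hT => ?_⟩
  obtain ⟨w, hw1, hw⟩ := exists_norm_eq_one_half_norm_mul_le (ne_zero_of_det_ne_zero hT)
  set B := {x | |⟪w, u x⟫| < δ}
  have hBm : MeasurableSet B := measurableSet_lt (by fun_prop) measurable_const
  have hBle : μ.real B ≤ m / finrank ℝ E :=
    ENNReal.toReal_le_of_le_ofReal (by positivity) (small w hw1)
  set gap := Real.log |T.det| - finrank ℝ E * Real.log ‖T‖ with hgap
  have lower : ∫ x, (Real.log (δ / 2) + Real.log ‖T‖ + B.indicator (fun _ => gap) x) ∂μ ≤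
      ∫ x, Real.log ‖T (u x)‖ ∂μ :=
    integral_mono ((integrable_const _).add ((integrable_const gap).indicator hBm))
      (integrable_log_norm_apply hu hu1 hT)
      fun x => log_le_log_norm_apply hT (hu1 x) (hw _) hδ hδ1
  rw [integral_add (integrable_const _) ((integrable_const gap).indicator hBm),
    integral_indicator_const _ hBm, integral_const, smul_eq_mul, smul_eq_mul] at lower
  have gap_nonpos : gap ≤ 0 := sub_nonpos.2 (log_abs_det_le_finrank_mul hT)
  have gap_integral : m / finrank ℝ E * gap =
      m / finrank ℝ E * Real.log |T.det| - m * Real.log ‖T‖ := by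
    rw [hgap]
    field_simp
  have := mul_le_mul_of_nonpos_right hBle gap_nonpos
  unfold isotropyPotential
  linarith

omit [FiniteDimensional ℝ E] in
lemma measurable_normalize : Measurable (NormedSpace.normalize : E → E) :=
  measurable_norm.inv.smul measurable_id

lemma integrable_inner_sq {y : X → E} (hy : Measurable y) (hy1 : ∀ x, ‖y x‖ ≤ 1) (c : E) :
    Integrable (fun x => ⟪c, y x⟫ ^ 2) μ := by
  refine Integrable.of_bound (C := ‖c‖ ^ 2)
    (hy.const_inner.pow_const 2).aestronglyMeasurable (.of_forall fun x => ?_)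
  rw [norm_pow]
  gcongr
  exact (abs_real_inner_le_norm _ _).trans (mul_le_of_le_one_right (norm_nonneg c) (hy1 x))

lemma integral_inner_normalize_sq_le (hu : Measurable u) (hu1 : ∀ x, ‖u x‖ = 1) {T : E →L[ℝ] E}
    (hT : T.det ≠ 0) {ε : ℝ}
    (hmin : ∀ S : E →L[ℝ] E, S.det ≠ 0 → isotropyPotential μ u T ≤ isotropyPotential μ u S + ε)
    {c : E} (hc : ‖c‖ = 1) :
    3 / 8 * ∫ x, ⟪c, normalize (T (u x))⟫ ^ 2 ∂μ ≤
      μ.real Set.univ / finrank ℝ E * Real.log 2 + ε := by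
  have det_shrink : (halveAlong c).det = 2⁻¹ := det_halveAlong hc
  have det_ne : (halveAlong c).det ≠ 0 := by simp [det_shrink]
  have compare := hmin (halveAlong c ∘L T) (det_comp_ne_zero det_ne hT)
  rw [isotropyPotential_comp hu hu1 det_ne hT, det_shrink, abs_inv, Real.log_inv,
    Nat.abs_ofNat] at compare
  have gain : ∫ x, Real.log (‖halveAlong c (T (u x))‖ / ‖T (u x)‖) ∂μ ≤
      ∫ x, -(3 / 8 * ⟪c, normalize (T (u x))⟫ ^ 2) ∂μ :=
    integral_mono (integrable_log_norm_comp_ratio hu hu1 det_ne hT)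
      (((integrable_inner_sq (measurable_normalize.comp (T.measurable.comp hu))
        (fun _ => norm_normalize_le_one _) c).const_mul _).neg)
      fun x => log_norm_halveAlong_ratio_le hc
  rw [integral_neg, integral_const_mul] at gain
  linarith

lemma exists_integral_inner_normalize_sq_le_of_norm_eq_one [NeZero μ] [Nontrivial E]
    (hu : Measurable u) (hu1 : ∀ x, ‖u x‖ = 1) (hnull : ∀ w, w ≠ 0 → μ {x | ⟪w, u x⟫ = 0} = 0) :
    ∃ T : E →L[ℝ] E, T.det ≠ 0 ∧ ∀ c, ‖c‖ = 1 →
      ∫ x, ⟪c, normalize (T (u x))⟫ ^ 2 ∂μ ≤ 4 * μ.real Set.univ / finrank ℝ E := by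
  obtain ⟨b, hb⟩ := exists_forall_le_isotropyPotential hu hu1 hnull
  set K := μ.real Set.univ / finrank ℝ E with hK
  have hK0 : 0 < K := div_pos (by simp) (Nat.cast_pos.2 finrank_pos)
  set G := isotropyPotential μ u '' {T | T.det ≠ 0}
  have bdd : BddBelow G := ⟨b, by rintro _ ⟨T, hT, rfl⟩; exact hb T hT⟩
  have nonempty : G.Nonempty :=
    ⟨_, ContinuousLinearMap.id ℝ E, by simp [ContinuousLinearMap.det], rfl⟩
  obtain ⟨_, ⟨T, hT, rfl⟩, near_min⟩ :=
    exists_lt_of_csInf_lt nonempty (lt_add_of_pos_right (sInf G) (half_pos hK0))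
  refine ⟨T, hT, fun c hc => ?_⟩
  have h := integral_inner_normalize_sq_le hu hu1 hT (ε := K / 2)
    (fun S hS => near_min.le.trans (by gcongr; exact csInf_le bdd ⟨S, hS, rfl⟩)) hc
  have log_two : Real.log 2 ≤ 1 := by linarith [Real.log_two_lt_d9]
  rw [mul_div_assoc, ← hK]
  linarith [mul_le_mul_of_nonneg_left log_two hK0.le]

theorem exists_integral_inner_normalize_sq_le [NeZero μ] {φ : X → E} (hφ : Measurable φ)
    (hφ0 : ∀ x, φ x ≠ 0) (hnull : ∀ w, w ≠ 0 → μ {x | ⟪w, φ x⟫ = 0} = 0) :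
    ∃ T : E →L[ℝ] E, T.det ≠ 0 ∧ ∀ c,
      ∫ x, ⟪c, normalize (T (φ x))⟫ ^ 2 ∂μ ≤ 4 * μ.real Set.univ / finrank ℝ E * ‖c‖ ^ 2 := by
  obtain ⟨x₀⟩ : Nonempty X := μ.nonempty_of_neZero
  have : Nontrivial E := ⟨⟨φ x₀, 0, hφ0 x₀⟩⟩
  have normalize_map (T : E →L[ℝ] E) (x : X) :
      (normalize (T (normalize (φ x))) : E) = normalize (T (φ x)) := by
    rw [NormedSpace.normalize.eq_1 (φ x), map_smul, normalize_smul_of_pos (by simp [hφ0])]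
  have hnull' (w : E) (hw : w ≠ 0) : μ {x | ⟪w, (normalize (φ x) : E)⟫ = 0} = 0 := by
    simpa [NormedSpace.normalize, real_inner_smul_right, hφ0] using hnull w hw
  obtain ⟨T, hT, bound⟩ := exists_integral_inner_normalize_sq_le_of_norm_eq_one
    (measurable_normalize.comp hφ) (fun x => norm_normalize_eq_one_iff.2 (hφ0 x)) hnull'
  refine ⟨T, hT, fun c => ?_⟩
  rcases eq_or_ne c 0 with rfl | hc
  · simp
  have h := bound (normalize c) (norm_normalize_eq_one_iff.2 hc)
  simp only [Function.comp_apply, normalize_map] at h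
  calc ∫ x, ⟪c, normalize (T (φ x))⟫ ^ 2 ∂μ
      = ‖c‖ ^ 2 * ∫ x, ⟪normalize c, normalize (T (φ x))⟫ ^ 2 ∂μ := by
        simp_rw [← integral_const_mul, ← mul_pow, ← real_inner_smul_left, norm_smul_normalize]
    _ ≤ 4 * μ.real Set.univ / finrank ℝ E * ‖c‖ ^ 2 := by
        rw [mul_comm]
        gcongr

end RadialIsotropy

section GaussianSignChanges

open ProbabilityTheory Real

lemma integral_abs_gaussianReal_zero_one : ∫ x, |x| ∂(gaussianReal 0 1) = √(2 / π) := by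
  have half_line : ∫ x in Set.Ioi (0 : ℝ), x * rexp (-(1 / 2) * x ^ 2) = 1 := by
    have h := integral_rpow_mul_exp_neg_mul_rpow (p := 2) (q := 1) (b := 1 / 2)
      (by norm_num) (by norm_num) (by norm_num)
    norm_num at h ⊢
    exact h
  calc ∫ x, |x| ∂(gaussianReal 0 1)
      = ∫ x : ℝ, (√(2 * π))⁻¹ * (|x| * rexp (-(1 / 2) * |x| ^ 2)) := by
        rw [integral_gaussianReal_eq_integral_smul one_ne_zero]
        congr with x
        simp only [gaussianPDFReal, NNReal.coe_one, mul_one, sub_zero, smul_eq_mul, sq_abs]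
        ring_nf
    _ = (√(2 * π))⁻¹ * 2 := by
        rw [integral_const_mul, integral_comp_abs (f := fun x => x * rexp (-(1 / 2) * x ^ 2)),
          half_line, mul_one]
    _ = √(2 / π) := by
        rw [sqrt_mul zero_le_two, sqrt_div zero_le_two]
        field_simp
        norm_num

variable {E : Type*} [NormedAddCommGroup E] [InnerProductSpace ℝ E] [FiniteDimensional ℝ E]
  [MeasurableSpace E] [BorelSpace E]

lemma map_inner_stdGaussian (a : E) :
    (stdGaussian E).map (fun c => ⟪a, c⟫) = (gaussianReal 0 1).map (fun x => ‖a‖ * x) := by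
  have h := IsGaussian.map_eq_gaussianReal (μ := stdGaussian E) (innerSL ℝ a)
  rw [integral_strongDual_stdGaussian, variance_dual_stdGaussian] at h
  rw [gaussianReal_map_const_mul]
  refine h.trans ?_
  congr 1
  · simp
  · ext; simp

lemma integral_abs_inner_stdGaussian (a : E) :
    ∫ c, |⟪a, c⟫| ∂(stdGaussian E) = √(2 / π) * ‖a‖ := by
  have h := congrArg (fun μ => ∫ x, |x| ∂μ) (map_inner_stdGaussian a)
  rw [integral_map (by fun_prop) (by fun_prop), integral_map (by fun_prop) (by fun_prop)] at h
  simp only [abs_mul, abs_norm] at h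
  rw [h, integral_const_mul, integral_abs_gaussianReal_zero_one, mul_comm]

lemma integral_inner_sq_stdGaussian (a : E) :
    ∫ c, ⟪a, c⟫ ^ 2 ∂(stdGaussian E) = ‖a‖ ^ 2 := by
  have h := variance_dual_stdGaussian (innerSL ℝ a)
  rw [variance_of_integral_eq_zero (by fun_prop) (integral_strongDual_stdGaussian _)] at h
  simpa using h

lemma abs_add_abs_le_abs_add_add (x y : ℝ) :
    |x| + |y| ≤ |x + y| + 3 / 32 * (x ^ 2 + y ^ 2) + 16 / 3 := by
  rcases abs_cases x with hx | hx <;> rcases abs_cases y with hy | hy <;>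
    rcases abs_cases (x + y) with hz | hz <;>
    nlinarith [sq_nonneg (3 * |x| - 16), sq_nonneg (3 * |y| - 16)]

lemma abs_add_abs_of_not_signChange {x y : ℝ} (h : ¬SignChange x y) :
    |x| + |y| = |x + y| := by
  unfold SignChange at h
  grind

lemma mul_norm_add_norm_le_stdGaussian_signChange (a b : E) :
    √(2 / π) * (‖a‖ + ‖b‖) ≤ √(2 / π) * ‖a + b‖ + 3 / 32 * (‖a‖ ^ 2 + ‖b‖ ^ 2) +
      16 / 3 * (stdGaussian E).real {c | SignChange ⟪a, c⟫ ⟪b, c⟫} := by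
  set S : Set E := {c | SignChange ⟪a, c⟫ ⟪b, c⟫}
  have hS : MeasurableSet S := measurableSet_signChange (by fun_prop) (by fun_prop)
  have linear (w : E) : Integrable (fun c => |⟪w, c⟫|) (stdGaussian E) :=
    (IsGaussian.integrable_dual _ (innerSL ℝ w)).abs
  have square (w : E) : Integrable (fun c => ⟪w, c⟫ ^ 2) (stdGaussian E) :=
    (IsGaussian.memLp_dual _ (innerSL ℝ w) 2 (by simp)).integrable_sq
  have quadratic : Integrable (fun c => 3 / 32 * (⟪a, c⟫ ^ 2 + ⟪b, c⟫ ^ 2)) (stdGaussian E) :=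
    ((square a).add (square b)).const_mul _
  have sum : Integrable (fun c => |⟪a + b, c⟫| + 3 / 32 * (⟪a, c⟫ ^ 2 + ⟪b, c⟫ ^ 2))
      (stdGaussian E) := (linear (a + b)).add quadratic
  have indicator : Integrable (S.indicator fun _ => (16 / 3 : ℝ)) (stdGaussian E) :=
    (integrable_const _).indicator hS
  have pointwise (c : E) : |⟪a, c⟫| + |⟪b, c⟫| ≤ |⟪a + b, c⟫| +
      3 / 32 * (⟪a, c⟫ ^ 2 + ⟪b, c⟫ ^ 2) + S.indicator (fun _ => 16 / 3) c := by
    rw [inner_add_left]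
    by_cases hc : c ∈ S
    · simpa [hc] using abs_add_abs_le_abs_add_add ⟪a, c⟫ ⟪b, c⟫
    · rw [abs_add_abs_of_not_signChange hc, Set.indicator_of_notMem hc]
      nlinarith [sq_nonneg ⟪a, c⟫, sq_nonneg ⟪b, c⟫]
  calc √(2 / π) * (‖a‖ + ‖b‖) = ∫ c, |⟪a, c⟫| + |⟪b, c⟫| ∂(stdGaussian E) := by
        rw [integral_add (linear a) (linear b), integral_abs_inner_stdGaussian,
          integral_abs_inner_stdGaussian, mul_add]
    _ ≤ ∫ c, |⟪a + b, c⟫| + 3 / 32 * (⟪a, c⟫ ^ 2 + ⟪b, c⟫ ^ 2) +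
          S.indicator (fun _ => 16 / 3) c ∂(stdGaussian E) :=
        integral_mono ((linear a).add (linear b))
          (sum.add indicator) pointwise
    _ = _ := by
        rw [integral_add sum indicator,
          integral_add (linear (a + b)) quadratic, integral_const_mul,
          integral_add (square a) (square b), integral_abs_inner_stdGaussian,
          integral_inner_sq_stdGaussian, integral_inner_sq_stdGaussian,
          integral_indicator_const _ hS, smul_eq_mul, mul_comm _ (16 / 3 : ℝ)]

lemma le_stdGaussian_signChange {a b : E} (ha : ‖a‖ = 1) (hb : ‖b‖ = 1) :
    3 / 64 - 3 / 32 * ⟪a, b⟫ ≤ (stdGaussian E).real {c | SignChange ⟪a, c⟫ ⟪b, c⟫} := by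
  have mean := mul_norm_add_norm_le_stdGaussian_signChange a b
  have sqrt_bound : 3 / 4 ≤ √(2 / π) := by
    rw [le_sqrt (by norm_num) (by positivity), le_div_iff₀ pi_pos]
    nlinarith [pi_lt_d2]
  have norm_add_sq : ‖a + b‖ ^ 2 = 2 + 2 * ⟪a, b⟫ := by
    rw [norm_add_sq_real, ha, hb]
    ring
  have norm_add_le_two : ‖a + b‖ ≤ 2 := (norm_add_le a b).trans (by rw [ha, hb]; norm_num)
  rw [ha, hb] at mean
  nlinarith [sq_nonneg (2 * ‖a + b‖ - 3)]

variable {Y : Type*} [MeasurableSpace Y] (ν : Measure Y) [IsProbabilityMeasure ν] {u : Y → E}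

omit [MeasurableSpace E] [BorelSpace E] in
lemma integral_prod_inner_eq_norm_integral_sq (hu : Integrable u ν) :
    ∫ q, ⟪u q.1, u q.2⟫ ∂(ν.prod ν) = ‖∫ y, u y ∂ν‖ ^ 2 := by
  have hint : Integrable (fun q : Y × Y => ⟪u q.1, u q.2⟫) (ν.prod ν) :=
    (hu.norm.mul_prod hu.norm).mono'
      ((hu.aestronglyMeasurable.comp_fst).inner (hu.aestronglyMeasurable.comp_snd))
      (.of_forall fun _ => norm_inner_le_norm _ _)
  rw [integral_prod _ hint]
  simp_rw [integral_inner hu, real_inner_comm (∫ y, u y ∂ν)]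
  rw [integral_inner hu, real_inner_self_eq_norm_sq]

lemma norm_integral_sq_le {K : ℝ} (hu : Measurable u) (hu1 : ∀ y, ‖u y‖ = 1)
    (hK : ∀ c, ∫ y, ⟪c, u y⟫ ^ 2 ∂ν ≤ K * ‖c‖ ^ 2) : ‖∫ y, u y ∂ν‖ ^ 2 ≤ K := by
  set c := ∫ y, u y ∂ν
  have hint : Integrable u ν := .of_bound hu.aestronglyMeasurable 1 (.of_forall fun y => (hu1 y).le)
  have norm_sq : ‖c‖ ^ 2 = ∫ y, ⟪c, u y⟫ ∂ν := by
    rw [integral_inner hint, real_inner_self_eq_norm_sq]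
  have jensen : (∫ y, ⟪c, u y⟫ ∂ν) ^ 2 ≤ ∫ y, ⟪c, u y⟫ ^ 2 ∂ν := by
    have hmem : MemLp (fun y => ⟪c, u y⟫) 2 ν := .of_bound (by fun_prop) ‖c‖
      (.of_forall fun y => by simpa [hu1] using norm_inner_le_norm (𝕜 := ℝ) c (u y))
    have h := variance_nonneg (fun y => ⟪c, u y⟫) ν
    rw [variance_eq_sub hmem] at h
    exact sub_nonneg.1 h
  have hK0 : 0 ≤ K := by
    obtain ⟨y₀⟩ := ν.nonempty_of_neZero
    have h := (integral_nonneg fun y => sq_nonneg ⟪u y₀, u y⟫).trans (hK (u y₀))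
    rwa [hu1, one_pow, mul_one] at h
  have h := jensen.trans (hK c)
  rw [← norm_sq] at h
  nlinarith [sq_nonneg ‖c‖]

lemma le_stdGaussian_prod_signChange (hu : Measurable u) (hu1 : ∀ y, ‖u y‖ = 1)
    (hK : ∀ c, ∫ y, ⟪c, u y⟫ ^ 2 ∂ν ≤ 1 / 16 * ‖c‖ ^ 2) :
    1 / 32 ≤ ((stdGaussian E).prod (ν.prod ν)).real
      {q | SignChange ⟪u q.2.1, q.1⟫ ⟪u q.2.2, q.1⟫} := by
  set S : Set (E × Y × Y) := {q | SignChange ⟪u q.2.1, q.1⟫ ⟪u q.2.2, q.1⟫}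
  have hS : MeasurableSet S := measurableSet_signChange (by fun_prop) (by fun_prop)
  have hint : Integrable (fun q : Y × Y => ⟪u q.1, u q.2⟫) (ν.prod ν) :=
    .of_bound (by fun_prop) 1 (.of_forall fun q => by
      simpa [hu1] using norm_inner_le_norm (𝕜 := ℝ) (u q.1) (u q.2))
  have hsec : Measurable fun q => (stdGaussian E) ((fun c => (c, q)) ⁻¹' S) :=
    measurable_measure_prodMk_right hS
  calc 1 / 32 ≤ 3 / 64 - 3 / 32 * ‖∫ y, u y ∂ν‖ ^ 2 := by
        linarith [norm_integral_sq_le ν hu hu1 hK]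
    _ = ∫ q, (3 / 64 - 3 / 32 * ⟪u q.1, u q.2⟫) ∂(ν.prod ν) := by
        rw [integral_sub (integrable_const _) (hint.const_mul _), integral_const_mul,
          integral_prod_inner_eq_norm_integral_sq ν (.of_bound hu.aestronglyMeasurable 1
            (.of_forall fun y => (hu1 y).le))]
        simp
    _ ≤ ∫ q, (stdGaussian E).real ((fun c => (c, q)) ⁻¹' S) ∂(ν.prod ν) :=
        integral_mono ((integrable_const _).sub (hint.const_mul _))
          (.of_bound hsec.ennreal_toReal.aestronglyMeasurable 1 (.of_forall fun q => by
            simp [abs_of_nonneg measureReal_nonneg, measureReal_le_one]))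
          fun q => le_stdGaussian_signChange (hu1 q.1) (hu1 q.2)
    _ = ((stdGaussian E).prod (ν.prod ν)).real S := by
        rw [measureReal_def, Measure.prod_apply_symm hS]
        exact integral_toReal hsec.aemeasurable (.of_forall fun q => measure_lt_top _ _)

end GaussianSignChanges

section IsotropicPolynomials

variable {σ : Type*} [Fintype σ]

/-- A nonzero polynomial does not vanish identically on the line joining `x₀`, where it is nonzero,
to `x`, so almost every homothety at `x₀` moves `x` off the zero set. -/
lemma volume_zeros_eq_zero {P : MvPolynomial σ ℝ} (hP : P ≠ 0) :
    volume {x | MvPolynomial.eval x P = 0} = 0 := by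
  obtain ⟨x₀, hx₀⟩ : ∃ x₀, MvPolynomial.eval x₀ P ≠ 0 := by
    by_contra! h
    exact hP (MvPolynomial.funext fun x => by simpa using h x)
  set Z := {x | MvPolynomial.eval x P = 0}
  have hZ : MeasurableSet Z := P.continuous_eval.measurable (measurableSet_singleton 0)
  have line_null (x : σ → ℝ) : ∀ᵐ t : ℝ, AffineMap.homothety x₀ t x ∉ Z := by
    have line_ne_zero : lineRestriction P x₀ (x - x₀) ≠ 0 := fun h => hx₀ <| by
      simpa using eval_lineRestriction P x₀ (x - x₀) 0 |>.symm.trans (by rw [h]; simp)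
    have finite : {t : ℝ | AffineMap.homothety x₀ t x ∈ Z}.Finite := by
      refine (lineRestriction P x₀ (x - x₀)).roots.toFinset.finite_toSet.subset fun t ht => ?_
      simpa [Polynomial.mem_roots line_ne_zero, add_comm, AffineMap.homothety_apply, Z] using ht
    exact measure_eq_zero_iff_ae_notMem.1 (finite.measure_zero volume)
  have hmeas : MeasurableSet {q : ℝ × (σ → ℝ) | AffineMap.homothety x₀ q.1 q.2 ∉ Z} := by
    simp only [AffineMap.homothety_apply, vsub_eq_sub, vadd_eq_add]
    exact (by fun_prop : Measurable fun q : ℝ × (σ → ℝ) => q.1 • (q.2 - x₀) + x₀) hZ.compl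
  have homothety_null : ∀ᵐ t : ℝ, ∀ᵐ x : σ → ℝ, AffineMap.homothety x₀ t x ∉ Z :=
    (Measure.ae_ae_comm hmeas).2 (.of_forall line_null)
  obtain ⟨t, ht, ht0⟩ :=
    (homothety_null.and (measure_eq_zero_iff_ae_notMem.1 (measure_singleton (0 : ℝ)))).exists
  have surjective : Function.Surjective (AffineMap.homothety x₀ t) :=
    (AffineEquiv.homothetyUnitsMulHom x₀ (Units.mk0 t ht0)).surjective
  have preimage_null : volume (AffineMap.homothety x₀ t ⁻¹' Z) = 0 :=
    measure_eq_zero_iff_ae_notMem.2 ht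
  rw [← Set.image_preimage_eq Z surjective, Measure.addHaar_image_homothety, preimage_null,
    mul_zero]

variable (d : ℕ)

/-- The vector of all monomials of degree at most `d` in each variable, evaluated at `x`. -/
noncomputable def monomialVector (x : σ → ℝ) : EuclideanSpace ℝ (σ → Fin (d + 1)) :=
  WithLp.toLp 2 fun α => ∏ i, x i ^ (α i : ℕ)

variable {d}

lemma measurable_monomialVector : Measurable (monomialVector d (σ := σ)) := by
  unfold monomialVector
  fun_prop

lemma monomialVector_ne_zero (x : σ → ℝ) : monomialVector d x ≠ 0 := by
  intro h
  simpa [monomialVector] using congrArg (fun y => y 0) h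

variable [DecidableEq σ]

/-- The polynomial of degree at most `d` in each variable with coefficients `c`. -/
noncomputable def polynomialOfCoeffs (c : EuclideanSpace ℝ (σ → Fin (d + 1))) :
    MvPolynomial σ ℝ :=
  ∑ α, MvPolynomial.monomial (Finsupp.equivFunOnFinite.symm fun i => (α i : ℕ)) (c α)

lemma eval_polynomialOfCoeffs (c : EuclideanSpace ℝ (σ → Fin (d + 1))) (x : σ → ℝ) :
    MvPolynomial.eval x (polynomialOfCoeffs c) = ⟪c, monomialVector d x⟫ := by
  simp [polynomialOfCoeffs, monomialVector, PiLp.inner_apply, MvPolynomial.eval_monomial,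
    Finsupp.prod_fintype, mul_comm]

lemma totalDegree_polynomialOfCoeffs_le (c : EuclideanSpace ℝ (σ → Fin (d + 1))) :
    (polynomialOfCoeffs c).totalDegree ≤ Fintype.card σ * d := by
  refine MvPolynomial.totalDegree_finsetSum_le (f := fun α => _) fun α _ =>
    (MvPolynomial.totalDegree_monomial_le _ _).trans ?_
  rw [Finsupp.sum_fintype _ _ fun _ => rfl]
  calc _ ≤ ∑ _ : σ, d := Finset.sum_le_sum fun i _ => (α i).is_le
    _ = _ := by simp

lemma polynomialOfCoeffs_ne_zero {c : EuclideanSpace ℝ (σ → Fin (d + 1))} (hc : c ≠ 0) :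
    polynomialOfCoeffs c ≠ 0 := by
  obtain ⟨α, hα⟩ : ∃ α, c α ≠ 0 := by
    by_contra! h
    exact hc (by ext α; simpa using h α)
  have exponent_injective : Function.Injective fun α : σ → Fin (d + 1) =>
      Finsupp.equivFunOnFinite.symm fun i => (α i : ℕ) :=
    Finsupp.equivFunOnFinite.symm.injective.comp Fin.val_injective.comp_left
  have coeff_eq : (polynomialOfCoeffs c).coeff
      (Finsupp.equivFunOnFinite.symm fun i => (α i : ℕ)) = c α := by
    simp [polynomialOfCoeffs, MvPolynomial.coeff_sum, MvPolynomial.coeff_monomial,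
      exponent_injective.eq_iff]
  intro h
  rw [h, MvPolynomial.coeff_zero] at coeff_eq
  exact hα coeff_eq.symm

lemma volume_inner_monomialVector_eq_zero {c : EuclideanSpace ℝ (σ → Fin (d + 1))} (hc : c ≠ 0) :
    volume {x | ⟪c, monomialVector d x⟫ = 0} = 0 := by
  simpa only [eval_polynomialOfCoeffs] using volume_zeros_eq_zero (polynomialOfCoeffs_ne_zero hc)

end IsotropicPolynomials

section Boxes

open ProbabilityTheory

lemma setIntegral_comp_add_linearMap_le {F : Type*} [NormedAddCommGroup F] [NormedSpace ℝ F]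
    [FiniteDimensional ℝ F] [MeasurableSpace F] [BorelSpace F] (μ : Measure F) [μ.IsAddHaarMeasure]
    {L : F →ₗ[ℝ] F} (hL : LinearMap.det L ≠ 0) {x : F} {K W : Set F} (hK : MeasurableSet K)
    (hW : MeasurableSet W) (hKW : ∀ t ∈ K, x + L t ∈ W) {f : F → ℝ} (hf0 : ∀ y, 0 ≤ f y)
    (hf : IntegrableOn f W μ) :
    ∫ t in K, f (x + L t) ∂μ ≤ |LinearMap.det L|⁻¹ * ∫ y in W, f y ∂μ := by
  have hemb : MeasurableEmbedding L :=
    (LinearMap.equivOfDetNeZero L hL).toContinuousLinearEquiv.toHomeomorph.measurableEmbedding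
  have hmap := Measure.map_linearMap_addHaar_eq_smul_addHaar μ hL
  have hg : Integrable (fun y => W.indicator f (x + y)) μ :=
    (hf.integrable_indicator hW).comp_add_left x
  have hgL : Integrable (fun t => W.indicator f (x + L t)) μ := by
    refine (hemb.integrable_map_iff (μ := μ) (g := fun y => W.indicator f (x + y))).1 ?_
    rw [hmap]
    exact hg.smul_measure ENNReal.ofReal_ne_top
  calc ∫ t in K, f (x + L t) ∂μ = ∫ t in K, W.indicator f (x + L t) ∂μ :=
        setIntegral_congr_fun hK fun t ht => (Set.indicator_of_mem (hKW t ht) f).symm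
    _ ≤ ∫ t, W.indicator f (x + L t) ∂μ :=
        setIntegral_le_integral hgL (.of_forall fun t => Set.indicator_nonneg (fun y _ => hf0 y) _)
    _ = |LinearMap.det L|⁻¹ * ∫ y, W.indicator f (x + y) ∂μ := by
        rw [← hemb.integral_map (μ := μ) fun y => W.indicator f (x + y), hmap,
          integral_smul_measure, ENNReal.toReal_ofReal (abs_nonneg _), abs_inv, smul_eq_mul]
    _ = |LinearMap.det L|⁻¹ * ∫ y in W, f y ∂μ := by
        rw [integral_add_left_eq_self (μ := μ) (W.indicator f), integral_indicator hW]

variable {σ : Type*} [Fintype σ]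

variable (σ) in
/-- The uniform probability measure on the unit cube. -/
noncomputable def cubeMeasure : Measure (σ → ℝ) := volume.restrict (Set.Icc 0 1)

instance : IsProbabilityMeasure (cubeMeasure σ) :=
  ⟨by simp [cubeMeasure, Real.volume_Icc_pi]⟩

variable {E : Type*} [NormedAddCommGroup E] [InnerProductSpace ℝ E] [FiniteDimensional ℝ E]
  [MeasurableSpace E] [BorelSpace E]

lemma exists_forall_le_stdGaussian_prod_signChange {φ : (σ → ℝ) → E} (hφ : Measurable φ)
    (hφ0 : ∀ x, φ x ≠ 0) {W : Set (σ → ℝ)} (hW : MeasurableSet W) (hW0 : volume W ≠ 0)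
    (hWtop : volume W ≠ ∞) (hnull : ∀ c : E, c ≠ 0 → volume {x | ⟪c, φ x⟫ = 0} = 0) :
    ∃ T : E →L[ℝ] E, ∀ (x : σ → ℝ) (L : (σ → ℝ) →ₗ[ℝ] (σ → ℝ)),
      (∀ t ∈ Set.Icc 0 1, x + L t ∈ W) →
      64 * volume.real W ≤ finrank ℝ E * |LinearMap.det L| →
      1 / 32 ≤ ((stdGaussian E).prod ((cubeMeasure σ).prod (cubeMeasure σ))).real
        {q | SignChange ⟪T q.1, φ (x + L q.2.1)⟫ ⟪T q.1, φ (x + L q.2.2)⟫} := by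
  have : NeZero (volume.restrict W) := ⟨by simpa using hW0⟩
  have : IsFiniteMeasure (volume.restrict W) := ⟨by simpa using hWtop.lt_top⟩
  have hW_pos : 0 < volume.real W := ENNReal.toReal_pos hW0 hWtop
  obtain ⟨T, hT, isotropic⟩ := exists_integral_inner_normalize_sq_le (μ := volume.restrict W)
    hφ hφ0 fun c hc => Measure.absolutelyContinuous_restrict (hnull c hc)
  refine ⟨T.adjoint, fun x L hL hdet => ?_⟩
  have prod_pos : 0 < finrank ℝ E * |LinearMap.det L| :=
    (by positivity : 0 < 64 * volume.real W).trans_le hdet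
  have det_pos : 0 < |LinearMap.det L| := pos_of_mul_pos_right prod_pos (by positivity)
  have dim_pos : (0 : ℝ) < finrank ℝ E := pos_of_mul_pos_left prod_pos (by positivity)
  set u : (σ → ℝ) → E := fun y => NormedSpace.normalize (T (φ y))
  have hT0 (y : σ → ℝ) : T (φ y) ≠ 0 := apply_ne_zero_of_det_ne_zero hT (hφ0 y)
  have hu : Measurable u := measurable_normalize.comp (T.measurable.comp hφ)
  have hu1 (y : σ → ℝ) : ‖u y‖ = 1 := norm_normalize (hT0 y)
  have same_sign (c : E) (y y' : σ → ℝ) : SignChange ⟪u y, c⟫ ⟪u y', c⟫ ↔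
      SignChange ⟪T.adjoint c, φ y⟫ ⟪T.adjoint c, φ y'⟫ := by
    simp only [ContinuousLinearMap.adjoint_inner_left, u, NormedSpace.normalize,
      real_inner_smul_left, real_inner_comm _ c]
    exact signChange_mul_iff (by simp [hT0]) (by simp [hT0])
  simp only [← same_sign]
  have hL_meas : Measurable fun t => x + L t :=
    L.continuous_of_finiteDimensional.measurable.const_add x
  refine le_stdGaussian_prod_signChange (cubeMeasure σ) (hu.comp hL_meas) (fun t => hu1 _)
    fun c => ?_
  calc ∫ t, ⟪c, u (x + L t)⟫ ^ 2 ∂(cubeMeasure σ)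
      ≤ |LinearMap.det L|⁻¹ * ∫ y in W, ⟪c, u y⟫ ^ 2 :=
        setIntegral_comp_add_linearMap_le volume (abs_pos.1 det_pos) measurableSet_Icc hW hL
          (fun y => sq_nonneg ⟪c, u y⟫) (integrable_inner_sq hu (fun y => (hu1 y).le) c)
    _ ≤ |LinearMap.det L|⁻¹ * (4 * volume.real W / finrank ℝ E * ‖c‖ ^ 2) := by
        gcongr
        simpa using isotropic c
    _ ≤ 1 / 16 * ‖c‖ ^ 2 := by
        rw [← mul_assoc]
        gcongr
        rw [inv_mul_le_iff₀ det_pos, div_le_iff₀ dim_pos]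
        linarith

lemma exists_isotropic_polynomials [DecidableEq σ] {W : Set (σ → ℝ)} (hW : MeasurableSet W)
    (hW0 : volume W ≠ 0) (hWtop : volume W ≠ ∞) (d : ℕ) :
    ∃ T : EuclideanSpace ℝ (σ → Fin (d + 1)) →L[ℝ] EuclideanSpace ℝ (σ → Fin (d + 1)),
      ∀ (x : σ → ℝ) (L : (σ → ℝ) →ₗ[ℝ] (σ → ℝ)), (∀ t ∈ Set.Icc 0 1, x + L t ∈ W) →
        64 * volume.real W ≤ (d + 1) ^ Fintype.card σ * |LinearMap.det L| →
        1 / 32 ≤ ((stdGaussian _).prod ((cubeMeasure σ).prod (cubeMeasure σ))).real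
          {q | SignChange (MvPolynomial.eval (x + L q.2.1) (polynomialOfCoeffs (T q.1)))
            (MvPolynomial.eval (x + L q.2.2) (polynomialOfCoeffs (T q.1)))} := by
  simpa [eval_polynomialOfCoeffs] using
    exists_forall_le_stdGaussian_prod_signChange (measurable_monomialVector (d := d))
      monomialVector_ne_zero hW hW0 hWtop fun c => volume_inner_monomialVector_eq_zero

end Boxes

section DisjointTubes

variable {ι σ : Type*} [Fintype ι] [Fintype σ]

lemma sum_volume_inter_signChange_shift_le (P : MvPolynomial σ ℝ) {p v : σ → ℝ} (hv : ‖v‖ ≤ 1)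
    (s : ℝ) {R : ℝ} (hR : 0 ≤ R) {C : ι → Set (σ → ℝ)} (hC : ∀ i, MeasurableSet (C i))
    {w : ι → σ → ℝ} (hdisj : Pairwise (Disjoint on fun i => (· + w i) '' C i))
    (hCR : ∀ i, ∀ x ∈ C i, ∃ t : ℝ, ‖x + w i - (p + t • v)‖ ≤ R) :
    ∑ i, volume (C i ∩ {x | SignChange (MvPolynomial.eval (x + w i) P)
        (MvPolynomial.eval (x + w i + s • v) P)}) ≤
      ENNReal.ofReal ((2 * (R + 1)) ^ Fintype.card σ * (P.totalDegree * |s|)) := by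
  set Z := {z | SignChange (MvPolynomial.eval z P) (MvPolynomial.eval (z + s • v) P)}
  have hP : Measurable fun z => MvPolynomial.eval z P := P.continuous_eval.measurable
  have hZ : MeasurableSet Z := measurableSet_signChange hP (hP.comp (measurable_id.add_const _))
  have translate (i : ι) : volume (C i ∩ (· + w i) ⁻¹' Z) = volume ((· + w i) '' C i ∩ Z) := by
    rw [← Set.image_inter_preimage, Set.image_add_right, measure_preimage_add_right]
  have image_meas (i : ι) : MeasurableSet ((· + w i) '' C i) :=
    (measurableEmbedding_addRight (w i)).measurableSet_image.2 (hC i)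
  calc ∑ i, volume (C i ∩ (· + w i) ⁻¹' Z) = ∑ i, volume ((· + w i) '' C i ∩ Z) :=
        Finset.sum_congr rfl fun i _ => translate i
    _ = volume (⋃ i, (· + w i) '' C i ∩ Z) := by
        rw [measure_iUnion _ fun i => (image_meas i).inter hZ, tsum_fintype]
        exact fun i j hij => (hdisj hij).mono Set.inter_subset_left Set.inter_subset_left
    _ ≤ _ := by
        rw [← Set.iUnion_inter]
        refine volume_inter_signChange_shift_le P (p := p) hv s hR fun z hz => ?_
        obtain ⟨i, x, hx, rfl⟩ := Set.mem_iUnion.1 hz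
        exact hCR i x hx

end DisjointTubes

section Hybrid

lemma SignChange.exists_consecutive {a : ℕ → ℝ} {n : ℕ} (h : SignChange (a 0) (a n)) :
    ∃ k < n, SignChange (a k) (a (k + 1)) := by
  induction n with
  | zero => simp [SignChange] at h
  | succ n ih =>
    rcases h.trans_or (b := a n) with h | h
    · obtain ⟨k, hk, hsc⟩ := ih h
      exact ⟨k, hk.trans n.lt_succ_self, hsc⟩
    · exact ⟨n, n.lt_succ_self, h⟩

variable {α : Type*} {n : ℕ} {t t' : Fin n → α}

/-- The vector with the first `k` coordinates of `t'` and the remaining ones of `t`: as `k` grows,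
a path from `t` to `t'` changing one coordinate at a time. -/
def hybrid (t t' : Fin n → α) (k : ℕ) : Fin n → α := fun i => if i < k then t' i else t i

lemma hybrid_zero : hybrid t t' 0 = t := by ext; simp [hybrid]

lemma hybrid_last : hybrid t t' n = t' := by ext; simp [hybrid]

lemma hybrid_succ (j : Fin n) :
    hybrid t t' (j + 1) = Function.update (hybrid t t' j) j (t' j) := by
  ext i
  rcases eq_or_ne i j with rfl | hij
  · simp [hybrid]
  · have : (i : ℕ) < j + 1 ↔ (i : ℕ) < j := by
      have := Fin.val_ne_of_ne hij
      lia
    simp [hybrid, hij, this]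

lemma hybrid_self (j : Fin n) : hybrid t t' j j = t j := by simp [hybrid]

lemma hybrid_mem_Icc [Preorder α] {u w : Fin n → α} (ht : t ∈ Set.Icc u w)
    (ht' : t' ∈ Set.Icc u w) (k : ℕ) :
    hybrid t t' k ∈ Set.Icc u w := by
  constructor <;> intro i <;> unfold hybrid <;> split_ifs
  exacts [ht'.1 i, ht.1 i, ht'.2 i, ht.2 i]

lemma SignChange.exists_hybrid {f : (Fin n → α) → ℝ} (h : SignChange (f t) (f t')) :
    ∃ j : Fin n, SignChange (f (hybrid t t' j))
      (f (Function.update (hybrid t t' j) j (t' j))) := by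
  rw [← hybrid_zero (t := t) (t' := t'), ← hybrid_last (t := t) (t' := t')] at h
  obtain ⟨k, hk, hsc⟩ := SignChange.exists_consecutive (a := fun k => f (hybrid t t' k)) h
  exact ⟨⟨k, hk⟩, by rwa [← hybrid_succ]⟩

end Hybrid

section BoxMap

variable {σ : Type*} [Fintype σ] [DecidableEq σ]

/-- The linear map sending the unit cube to the parallelepiped with edges `ℓ i • w i`. -/
noncomputable def boxMap (ℓ : σ → ℝ) (w : σ → σ → ℝ) : (σ → ℝ) →ₗ[ℝ] (σ → ℝ) :=
  Fintype.linearCombination ℝ fun i => ℓ i • w i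

variable {ℓ : σ → ℝ} {w : σ → σ → ℝ}

omit [DecidableEq σ] in
lemma boxMap_apply (t : σ → ℝ) : boxMap ℓ w t = ∑ i, t i • ℓ i • w i :=
  Fintype.linearCombination_apply ℝ _ t

lemma boxMap_update (t : σ → ℝ) (j : σ) (y : ℝ) :
    boxMap ℓ w (Function.update t j y) = boxMap ℓ w t + ((y - t j) * ℓ j) • w j := by
  have : Function.update t j y = t + Pi.single j (y - t j) := by
    ext i
    rcases eq_or_ne i j with rfl | hij <;> simp_all
  rw [this, map_add, boxMap, Fintype.linearCombination_apply_single, smul_smul]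

lemma abs_det_boxMap (hℓ : ∀ i, 0 ≤ ℓ i) :
    |LinearMap.det (boxMap ℓ w)| = (∏ i, ℓ i) * |(Matrix.of fun i j => w j i).det| := by
  have toMatrix : LinearMap.toMatrix' (boxMap ℓ w) = Matrix.of fun i j => ℓ j * w j i := by
    ext i j
    simp [boxMap, LinearMap.toMatrix'_apply]
  rw [← LinearMap.det_toMatrix', toMatrix, ← abs_of_nonneg (Finset.prod_nonneg fun i _ => hℓ i),
    ← abs_mul, ← Matrix.det_mul_row]
  rfl

omit [DecidableEq σ] in
lemma norm_boxMap_le (hℓ : ∀ i, 0 ≤ ℓ i) (hw : ∀ i, ‖w i‖ ≤ 1) {t : σ → ℝ}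
    (ht : t ∈ Set.Icc 0 1) : ‖boxMap ℓ w t‖ ≤ ∑ i, ℓ i := by
  rw [boxMap_apply]
  refine norm_sum_le_of_le _ fun i _ => ?_
  rw [norm_smul, norm_smul, Real.norm_of_nonneg (ht.1 i), Real.norm_of_nonneg (hℓ i)]
  calc t i * (ℓ i * ‖w i‖) ≤ 1 * (ℓ i * 1) := by
        have := hℓ i
        gcongr
        exacts [ht.2 i, hw i]
    _ = ℓ i := by ring

end BoxMap

section Counting

variable {n : ℕ} {κ : Fin n → Type*} [∀ j, Fintype (κ j)] {p v : ∀ j, κ j → Fin n → ℝ}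
  {ℓ : Fin n → ℝ} {r : ℝ} {C : (∀ j, κ j) → Set (Fin n → ℝ)}

lemma add_mem_cthickening {F : Type*} [SeminormedAddCommGroup F] {r : ℝ} {D : Set F} {x w : F}
    (hx : x ∈ D) (hw : ‖w‖ ≤ r) : x + w ∈ Metric.cthickening r D :=
  Metric.mem_cthickening_of_dist_le _ x r D hx (by simpa [dist_eq_norm] using hw)

/-- The pieces with `a j = b`, translated along a path of edges of their boxes, stay disjoint
and lie in a tube around the line of direction `v j b`. -/
lemma sum_volume_inter_signChange_fiber_le [∀ j, DecidableEq (κ j)] (P : MvPolynomial (Fin n) ℝ)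
    (hv : ∀ j b, ‖v j b‖ ≤ 1) (hℓ : ∀ j, 0 ≤ ℓ j) (hℓr : ∑ j, ℓ j ≤ r) (hr1 : r ≤ 1)
    (hC : ∀ a, MeasurableSet (C a))
    (hdisj : Pairwise (Disjoint on fun a => Metric.cthickening r (C a)))
    (hCyl : ∀ a, ∀ x ∈ C a, ∀ j, ∃ τ : ℝ, ‖x - (p j (a j) + τ • v j (a j))‖ ≤ 2)
    {t : Fin n → ℝ} (ht : t ∈ Set.Icc 0 1) {j : Fin n} (b : κ j) (s : ℝ) :
    ∑ a : {a : ∀ j, κ j // a j = b}, volume (C a ∩ {x | SignChange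
        (MvPolynomial.eval (x + boxMap ℓ (fun i => v i (a.1 i)) t) P)
        (MvPolynomial.eval (x + boxMap ℓ (fun i => v i (a.1 i)) t + s • v j b) P)}) ≤
      ENNReal.ofReal (8 ^ n * (P.totalDegree * |s|)) := by
  have box_le (a : ∀ j, κ j) : ‖boxMap ℓ (fun i => v i (a i)) t‖ ≤ r :=
    (norm_boxMap_le hℓ (fun i => hv i (a i)) ht).trans hℓr
  have image_subset (a : ∀ j, κ j) :
      (· + boxMap ℓ (fun i => v i (a i)) t) '' C a ⊆ Metric.cthickening r (C a) :=
    fun _ ⟨_, hx, h⟩ => h ▸ add_mem_cthickening hx (box_le a)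
  have in_tube (a : {a : ∀ j, κ j // a j = b}) (x) (hx : x ∈ C a) :
      ∃ τ : ℝ, ‖x + boxMap ℓ (fun i => v i (a.1 i)) t - (p j b + τ • v j b)‖ ≤ 3 := by
    obtain ⟨τ, hτ⟩ := hCyl a x hx j
    rw [a.2] at hτ
    refine ⟨τ, ?_⟩
    rw [add_sub_right_comm]
    linarith [norm_add_le (x - (p j b + τ • v j b)) (boxMap ℓ (fun i => v i (a.1 i)) t), box_le a]
  refine (sum_volume_inter_signChange_shift_le P (hv j b) s zero_le_three
    (fun a : {a : ∀ j, κ j // a j = b} => hC a) (fun a a' haa' => ?_) in_tube).trans_eq ?_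
  · exact (hdisj (Subtype.coe_ne_coe.2 haa')).mono (image_subset a) (image_subset a')
  · norm_num

lemma sum_volume_inter_signChange_edge_le (P : MvPolynomial (Fin n) ℝ)
    (hv : ∀ j b, ‖v j b‖ ≤ 1) (hℓ : ∀ j, 0 ≤ ℓ j) (hℓr : ∑ j, ℓ j ≤ r) (hr1 : r ≤ 1)
    (hC : ∀ a, MeasurableSet (C a))
    (hdisj : Pairwise (Disjoint on fun a => Metric.cthickening r (C a)))
    (hCyl : ∀ a, ∀ x ∈ C a, ∀ j, ∃ τ : ℝ, ‖x - (p j (a j) + τ • v j (a j))‖ ≤ 2)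
    {t : Fin n → ℝ} (ht : t ∈ Set.Icc 0 1) {j : Fin n} {y : ℝ} (hy : |y - t j| ≤ 1) :
    ∑ a, volume (C a ∩ {x | SignChange (MvPolynomial.eval (x + boxMap ℓ (fun i => v i (a i)) t) P)
        (MvPolynomial.eval
          (x + boxMap ℓ (fun i => v i (a i)) (Function.update t j y)) P)}) ≤
      ENNReal.ofReal (Fintype.card (κ j) * (8 ^ n * (P.totalDegree * ℓ j))) := by
  classical
  have edge_length_le : |(y - t j) * ℓ j| ≤ ℓ j := by
    rw [abs_mul, abs_of_nonneg (hℓ j)]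
    exact mul_le_of_le_one_left (hℓ j) hy
  calc _ = ∑ b, ∑ a : {a : ∀ j, κ j // a j = b}, volume (C a ∩ {x | SignChange
        (MvPolynomial.eval (x + boxMap ℓ (fun i => v i (a.1 i)) t) P)
        (MvPolynomial.eval
          (x + boxMap ℓ (fun i => v i (a.1 i)) t + ((y - t j) * ℓ j) • v j b) P)}) := by
        rw [← Fintype.sum_fiberwise (fun a => a j)]
        refine Finset.sum_congr rfl fun b _ => Finset.sum_congr rfl fun a _ => ?_
        simp only [boxMap_update, add_assoc, a.2]
    _ ≤ ∑ _ : κ j, ENNReal.ofReal (8 ^ n * (P.totalDegree * ℓ j)) := by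
        refine Finset.sum_le_sum fun b _ => (sum_volume_inter_signChange_fiber_le P hv hℓ hℓr hr1
          hC hdisj hCyl ht b _).trans (ENNReal.ofReal_le_ofReal ?_)
        gcongr
    _ = _ := by
        rw [Finset.sum_const, Finset.card_univ, nsmul_eq_mul,
          ENNReal.ofReal_mul (p := Fintype.card (κ j)) (by positivity), ENNReal.ofReal_natCast]

lemma sum_volume_inter_signChange_box_le (P : MvPolynomial (Fin n) ℝ)
    (hv : ∀ j b, ‖v j b‖ ≤ 1) (hℓ : ∀ j, 0 ≤ ℓ j) (hℓr : ∑ j, ℓ j ≤ r) (hr1 : r ≤ 1)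
    (hC : ∀ a, MeasurableSet (C a))
    (hdisj : Pairwise (Disjoint on fun a => Metric.cthickening r (C a)))
    (hCyl : ∀ a, ∀ x ∈ C a, ∀ j, ∃ τ : ℝ, ‖x - (p j (a j) + τ • v j (a j))‖ ≤ 2)
    {t t' : Fin n → ℝ} (ht : t ∈ Set.Icc 0 1) (ht' : t' ∈ Set.Icc 0 1) :
    ∑ a, volume (C a ∩ {x | SignChange (MvPolynomial.eval (x + boxMap ℓ (fun i => v i (a i)) t) P)
        (MvPolynomial.eval (x + boxMap ℓ (fun i => v i (a i)) t') P)}) ≤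
      ENNReal.ofReal (∑ j, Fintype.card (κ j) * (8 ^ n * (P.totalDegree * ℓ j))) := by
  set edge : Fin n → (∀ j, κ j) → Set (Fin n → ℝ) := fun j a => {x | SignChange
    (MvPolynomial.eval (x + boxMap ℓ (fun i => v i (a i)) (hybrid t t' j)) P)
    (MvPolynomial.eval (x + boxMap ℓ (fun i => v i (a i))
      (Function.update (hybrid t t' j) j (t' j))) P)}
  have edge_le (j : Fin n) : ∑ a, volume (C a ∩ edge j a) ≤
      ENNReal.ofReal (Fintype.card (κ j) * (8 ^ n * (P.totalDegree * ℓ j))) := by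
    refine sum_volume_inter_signChange_edge_le P hv hℓ hℓr hr1 hC hdisj hCyl
      (hybrid_mem_Icc ht ht' j) ?_
    rw [hybrid_self, abs_le]
    constructor <;> linarith [ht.1 j, ht.2 j, ht'.1 j, ht'.2 j,
      show (0 : Fin n → ℝ) j = 0 from rfl, show (1 : Fin n → ℝ) j = 1 from rfl]
  calc _ ≤ ∑ a, ∑ j, volume (C a ∩ edge j a) := by
        refine Finset.sum_le_sum fun a _ =>
          (measure_mono ?_).trans (measure_iUnion_fintype_le _ _)
        rintro x ⟨hx, hsc⟩
        obtain ⟨j, hj⟩ := SignChange.exists_hybrid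
          (f := fun t => MvPolynomial.eval (x + boxMap ℓ (fun i => v i (a i)) t) P) hsc
        exact Set.mem_iUnion.2 ⟨j, hx, hj⟩
    _ = ∑ j, ∑ a, volume (C a ∩ edge j a) := Finset.sum_comm
    _ ≤ ∑ j, ENNReal.ofReal (Fintype.card (κ j) * (8 ^ n * (P.totalDegree * ℓ j))) :=
        Finset.sum_le_sum fun j _ => edge_le j
    _ = _ := by
        rw [ENNReal.ofReal_sum_of_nonneg fun j _ => ?_]
        have := hℓ j
        positivity

end Counting

section DoubleCounting

lemma mul_sum_measure_le {ι X Ω : Type*} [Fintype ι] [MeasurableSpace X] [MeasurableSpace Ω]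
    {μ : Measure X} [SFinite μ] {ρ : Measure Ω} [IsProbabilityMeasure ρ] {C : ι → Set X}
    (hC : ∀ i, MeasurableSet (C i)) {S : ι → Set (X × Ω)} (hS : ∀ i, MeasurableSet (S i))
    {η B : ℝ≥0∞} (hη : ∀ i, ∀ x ∈ C i, η ≤ ρ {ω | (x, ω) ∈ S i})
    (hB : ∀ᵐ ω ∂ρ, ∑ i, μ (C i ∩ {x | (x, ω) ∈ S i}) ≤ B) :
    η * ∑ i, μ (C i) ≤ B := by
  have slice_eq (i : ι) (ω : Ω) :
      μ (C i ∩ {x | (x, ω) ∈ S i}) = μ.restrict (C i) ((fun x => (x, ω)) ⁻¹' S i) := by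
    rw [Measure.restrict_apply (measurable_prodMk_right (hS i)), Set.inter_comm]
    rfl
  calc η * ∑ i, μ (C i) = ∑ i, ∫⁻ _ in C i, η ∂μ := by simp [Finset.mul_sum]
    _ ≤ ∑ i, ∫⁻ x in C i, ρ (Prod.mk x ⁻¹' S i) ∂μ :=
        Finset.sum_le_sum fun i _ => setLIntegral_mono' (hC i) (hη i)
    _ = ∑ i, ∫⁻ ω, μ (C i ∩ {x | (x, ω) ∈ S i}) ∂ρ := by
        refine Finset.sum_congr rfl fun i _ => ?_
        simp_rw [slice_eq, ← Measure.prod_apply (hS i), ← Measure.prod_apply_symm (hS i)]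
    _ = ∫⁻ ω, ∑ i, μ (C i ∩ {x | (x, ω) ∈ S i}) ∂ρ := by
        simp_rw [slice_eq]
        exact (lintegral_finsetSum _ fun i _ => measurable_measure_prodMk_right (hS i)).symm
    _ ≤ ∫⁻ _, B ∂ρ := lintegral_mono_ae hB
    _ = B := by simp

end DoubleCounting

section DisjointCompactPieces

variable {ι X : Type*} [Finite ι] [MeasurableSpace X] {μ : Measure X}

lemma exists_cthickening_disjoint_measure_le [MetricSpace X] [ProperSpace X] [BorelSpace X]
    [IsFiniteMeasureOnCompacts μ] {C : ι → Set X} (hC : ∀ i, IsCompact (C i))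
    (hdisj : Pairwise (Disjoint on C)) (h0 : μ (⋃ i, C i) ≠ 0) :
    ∃ r ∈ Set.Ioo (0 : ℝ) 1, Pairwise (Disjoint on fun i => Metric.cthickening r (C i)) ∧
      μ (Metric.cthickening r (⋃ i, C i)) ≤ 2 * μ (⋃ i, C i) := by
  have union_compact : IsCompact (⋃ i, C i) := isCompact_iUnion hC
  have eventually_le : ∀ᶠ r in 𝓝[>] (0 : ℝ),
      μ (Metric.cthickening r (⋃ i, C i)) ≤ 2 * μ (⋃ i, C i) :=
    ((tendsto_measure_cthickening_of_isCompact union_compact).mono_left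
      nhdsWithin_le_nhds).eventually_le_const <| by
        simpa using ENNReal.mul_lt_mul_left h0 union_compact.measure_lt_top.ne ENNReal.one_lt_two
  have eventually_disjoint : ∀ᶠ r in 𝓝[>] (0 : ℝ),
      Pairwise (Disjoint on fun i => Metric.cthickening r (C i)) := by
    simp only [Pairwise, Filter.eventually_all]
    intro i j hij
    obtain ⟨δ, hδ, h⟩ := (hdisj hij).exists_cthickenings (hC i) (hC j).isClosed
    filter_upwards [Ioo_mem_nhdsGT hδ] with r hr
    exact h.mono (Metric.cthickening_mono hr.2.le _) (Metric.cthickening_mono hr.2.le _)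
  obtain ⟨r, hle, hd, hr⟩ := (eventually_le.and (eventually_disjoint.and
    (Ioo_mem_nhdsGT zero_lt_one))).exists
  exact ⟨r, hr, hd, hle⟩

lemma exists_disjoint_measurable_iUnion_eq {S : ι → Set X} (hS : ∀ i, MeasurableSet (S i)) :
    ∃ D : ι → Set X, (∀ i, MeasurableSet (D i)) ∧ (∀ i, D i ⊆ S i) ∧ Pairwise (Disjoint on D) ∧
      ⋃ i, D i = ⋃ i, S i := by
  obtain ⟨N, ⟨e⟩⟩ := Finite.exists_equiv_fin ι
  refine ⟨fun i => disjointed (S ∘ e.symm) (e i), fun i => ?_, fun i => ?_, ?_, ?_⟩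
  · exact disjointedRec (p := MeasurableSet) (fun _ j ht => ht.diff (hS _)) (hS _)
  · simpa using disjointed_le (S ∘ e.symm) (e i)
  · exact (disjoint_disjointed (S ∘ e.symm)).comp_of_injective e.injective
  · rw [e.surjective.iUnion_comp (disjointed (S ∘ e.symm)), iUnion_disjointed]
    exact e.symm.surjective.iUnion_comp S

lemma measure_iUnion_le_of_forall_isCompact [TopologicalSpace X] [T2Space X]
    [OpensMeasurableSpace X] [μ.InnerRegular] {S : ι → Set X} (hS : ∀ i, MeasurableSet (S i))
    {B : ℝ≥0∞} (hB : ∀ C : ι → Set X, (∀ i, IsCompact (C i)) → (∀ i, C i ⊆ S i) →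
      Pairwise (Disjoint on C) → μ (⋃ i, C i) ≤ B) :
    μ (⋃ i, S i) ≤ B := by
  classical
  have := Fintype.ofFinite ι
  obtain ⟨D, hD, hDS, hdisj, hDU⟩ := exists_disjoint_measurable_iUnion_eq hS
  let J := {C : ι → Set X // ∀ i, IsCompact (C i) ∧ C i ⊆ D i}
  have measure_le_iSup (i : ι) : μ (D i) ≤ ⨆ C : J, μ (C.1 i) := by
    rw [(hD i).measure_eq_iSup_isCompact]
    refine iSup₂_le fun K hK => iSup_le fun hKc => ?_
    refine le_iSup_of_le ⟨Function.update (fun _ => ∅) i K, fun j => ?_⟩ (by simp)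
    rcases eq_or_ne j i with rfl | hj <;> simp [*]
  have directed (C C' : J) : ∃ C'' : J, ∀ i, μ (C.1 i) ≤ μ (C''.1 i) ∧ μ (C'.1 i) ≤ μ (C''.1 i) :=
    ⟨⟨fun i => C.1 i ∪ C'.1 i, fun i => ⟨(C.2 i).1.union (C'.2 i).1,
      Set.union_subset (C.2 i).2 (C'.2 i).2⟩⟩, fun i => ⟨measure_mono Set.subset_union_left,
      measure_mono Set.subset_union_right⟩⟩
  calc μ (⋃ i, S i) ≤ ∑ i, μ (D i) := hDU ▸ measure_iUnion_fintype_le μ D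
    _ ≤ ∑ i, ⨆ C : J, μ (C.1 i) := Finset.sum_le_sum fun i _ => measure_le_iSup i
    _ = ⨆ C : J, ∑ i, μ (C.1 i) := ENNReal.finsetSum_iSup directed
    _ ≤ B := iSup_le fun C => by
        have C_disjoint : Pairwise (Disjoint on C.1) :=
          fun i j hij => (hdisj hij).mono (C.2 i).2 (C.2 j).2
        rw [← tsum_fintype (L := .unconditional ι),
          ← measure_iUnion C_disjoint fun i => (C.2 i).1.measurableSet]
        exact hB C.1 (fun i => (C.2 i).1) (fun i => (C.2 i).2.trans (hDS i)) C_disjoint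

end DisjointCompactPieces

section TransverseFamilies

open ProbabilityTheory

variable {n : ℕ} {κ : Fin n → Type*} [∀ j, Fintype (κ j)] {p v : ∀ j, κ j → Fin n → ℝ} {θ : ℝ}
  {C : (∀ j, κ j) → Set (Fin n → ℝ)}

lemma measurableSet_signChange_eval_polynomialOfCoeffs {σ : Type*} [Fintype σ] [DecidableEq σ]
    {d : ℕ} (T : EuclideanSpace ℝ (σ → Fin (d + 1)) →L[ℝ] EuclideanSpace ℝ (σ → Fin (d + 1)))
    (L : (σ → ℝ) →ₗ[ℝ] (σ → ℝ)) :
    MeasurableSet {q : (σ → ℝ) × EuclideanSpace ℝ (σ → Fin (d + 1)) × (σ → ℝ) × (σ → ℝ) |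
      SignChange (MvPolynomial.eval (q.1 + L q.2.2.1) (polynomialOfCoeffs (T q.2.1)))
        (MvPolynomial.eval (q.1 + L q.2.2.2) (polynomialOfCoeffs (T q.2.1)))} := by
  have hL : Measurable L := L.continuous_of_finiteDimensional.measurable
  have hφ := measurable_monomialVector (d := d) (σ := σ)
  simp only [eval_polynomialOfCoeffs]
  exact measurableSet_signChange (by fun_prop) (by fun_prop)

lemma ae_prod_cubeMeasure_mem_Icc {σ Ω : Type*} [Fintype σ] [MeasurableSpace Ω] (γ : Measure Ω) :
    ∀ᵐ q ∂γ.prod ((cubeMeasure σ).prod (cubeMeasure σ)),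
      q.2.1 ∈ Set.Icc 0 1 ∧ q.2.2 ∈ Set.Icc 0 1 := by
  have mem_cube : ∀ᵐ t ∂cubeMeasure σ, t ∈ Set.Icc 0 1 := ae_restrict_mem measurableSet_Icc
  exact Measure.quasiMeasurePreserving_snd.ae
    ((Measure.quasiMeasurePreserving_fst.ae mem_cube).and
      (Measure.quasiMeasurePreserving_snd.ae mem_cube))

lemma mul_sum_volume_le_sum_degree_mul {ℓ : Fin n → ℝ} {r : ℝ} (hv : ∀ j b, ‖v j b‖ ≤ 1)
    (hℓ : ∀ j, 0 ≤ ℓ j) (hℓr : ∑ j, ℓ j ≤ r) (hr1 : r ≤ 1) (hC : ∀ a, MeasurableSet (C a))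
    (hdisj : Pairwise (Disjoint on fun a => Metric.cthickening r (C a)))
    (hCyl : ∀ a, ∀ x ∈ C a, ∀ j, ∃ τ : ℝ, ‖x - (p j (a j) + τ • v j (a j))‖ ≤ 2)
    {W : Set (Fin n → ℝ)} (hW : MeasurableSet W) (hW0 : volume W ≠ 0) (hWtop : volume W ≠ ∞)
    (hCW : ∀ a, Metric.cthickening r (C a) ⊆ W) {d : ℕ}
    (hd : ∀ a : ∀ j, κ j, 64 * volume.real W ≤
      (d + 1) ^ n * |LinearMap.det (boxMap ℓ fun i => v i (a i))|) :
    ENNReal.ofReal (1 / 32) * ∑ a, volume (C a) ≤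
      ENNReal.ofReal (∑ j, Fintype.card (κ j) * (8 ^ n * (n * d * ℓ j))) := by
  obtain ⟨T, hT⟩ := exists_isotropic_polynomials hW hW0 hWtop d
  have degree_le (c) : ((polynomialOfCoeffs (T c)).totalDegree : ℝ) ≤ n * d := by
    exact_mod_cast (totalDegree_polynomialOfCoeffs_le (T c)).trans_eq (by simp)
  refine mul_sum_measure_le
    (ρ := (stdGaussian _).prod ((cubeMeasure (Fin n)).prod (cubeMeasure (Fin n)))) hC
    (fun a => measurableSet_signChange_eval_polynomialOfCoeffs T (boxMap ℓ fun i => v i (a i)))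
    (fun a x hx => ENNReal.ofReal_le_of_le_toReal <|
      hT x _ (fun t ht => ?_) (by simpa using hd a)) ?_
  · exact hCW a <| add_mem_cthickening hx <|
      (norm_boxMap_le hℓ (fun i => hv i (a i)) ht).trans hℓr
  · filter_upwards [ae_prod_cubeMeasure_mem_Icc _] with q hq
    refine (sum_volume_inter_signChange_box_le (polynomialOfCoeffs (T q.1)) hv hℓ hℓr hr1 hC hdisj
      hCyl hq.1 hq.2).trans (ENNReal.ofReal_le_ofReal ?_)
    have := degree_le q.1
    gcongr with j
    exact hℓ j

/-- The `a`-th box has edges `s / card (κ j)` along `v j (a j)`, so that each direction `j`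
contributes the same amount to the count of sign changes. -/
lemma sum_volume_le_of_le_pow_mul (hv : ∀ j b, ‖v j b‖ ≤ 1) {r s : ℝ} (hs : 0 ≤ s)
    (hsr : n * s ≤ r) (hr1 : r ≤ 1) [∀ j, Nonempty (κ j)]
    (hdet : ∀ a : ∀ j, κ j, θ ≤ |(Matrix.of fun i j => v j (a j) i).det|)
    (hC : ∀ a, MeasurableSet (C a))
    (hdisj : Pairwise (Disjoint on fun a => Metric.cthickening r (C a)))
    (hCyl : ∀ a, ∀ x ∈ C a, ∀ j, ∃ τ : ℝ, ‖x - (p j (a j) + τ • v j (a j))‖ ≤ 2)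
    {W : Set (Fin n → ℝ)} (hW : MeasurableSet W) (hW0 : volume W ≠ 0) (hWtop : volume W ≠ ∞)
    (hCW : ∀ a, Metric.cthickening r (C a) ⊆ W) {d : ℕ}
    (hd : 64 * volume.real W * ∏ j, (Fintype.card (κ j) : ℝ) ≤ ((d + 1) * s) ^ n * θ) :
    ∑ a, volume (C a) ≤ ENNReal.ofReal (32 * n ^ 2 * 8 ^ n * (d * s)) := by
  set ℓ : Fin n → ℝ := fun j => s / Fintype.card (κ j)
  have hℓ (j : Fin n) : 0 ≤ ℓ j := by positivity
  have card_mul_ℓ (j : Fin n) : Fintype.card (κ j) * ℓ j = s := by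
    simp [ℓ, mul_div_cancel₀]
  have sum_ℓ_le : ∑ j, ℓ j ≤ r := by
    calc ∑ j, ℓ j ≤ ∑ _ : Fin n, s := Finset.sum_le_sum fun j _ =>
          div_le_self hs (by exact_mod_cast Nat.one_le_iff_ne_zero.2 Fintype.card_ne_zero)
      _ ≤ r := by simpa using hsr
  have box_large (a : ∀ j, κ j) : 64 * volume.real W ≤
      (d + 1) ^ n * |LinearMap.det (boxMap ℓ fun i => v i (a i))| := by
    have prod_pos : 0 < ∏ j, (Fintype.card (κ j) : ℝ) :=
      Finset.prod_pos fun j _ => by exact_mod_cast Fintype.card_pos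
    rw [abs_det_boxMap hℓ, Finset.prod_div_distrib, Finset.prod_const, Finset.card_univ,
      Fintype.card_fin, div_mul_eq_mul_div, ← mul_div_assoc, le_div_iff₀ prod_pos, ← mul_assoc,
      ← mul_pow]
    exact hd.trans (by gcongr; exact hdet a)
  have sum_degree_mul_ℓ : ∑ j, Fintype.card (κ j) * (8 ^ n * (n * d * ℓ j)) =
      n ^ 2 * 8 ^ n * (d * s) := by
    calc _ = ∑ _ : Fin n, 8 ^ n * (n * d * s) :=
          Finset.sum_congr rfl fun j _ => by rw [← card_mul_ℓ j]; ring
      _ = n ^ 2 * 8 ^ n * (d * s) := by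
          rw [Finset.sum_const, Finset.card_univ, Fintype.card_fin, nsmul_eq_mul]
          ring
  have mul_sum_le := mul_sum_volume_le_sum_degree_mul hv hℓ sum_ℓ_le hr1 hC hdisj hCyl hW hW0 hWtop
    hCW box_large
  rw [sum_degree_mul_ℓ] at mul_sum_le
  calc ∑ a, volume (C a) = ENNReal.ofReal 32 * (ENNReal.ofReal (1 / 32) * ∑ a, volume (C a)) := by
        rw [← mul_assoc, ← ENNReal.ofReal_mul (by norm_num)]
        norm_num
    _ ≤ ENNReal.ofReal 32 * ENNReal.ofReal (n ^ 2 * 8 ^ n * (d * s)) := by gcongr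
    _ = _ := by rw [← ENNReal.ofReal_mul (by norm_num)]; ring_nf

lemma exists_nat_mul_pow_le_le_succ_mul_pow (hn : n ≠ 0) {V s : ℝ} (hV : 0 ≤ V) (hs : 0 < s) :
    ∃ d : ℕ, (d * s) ^ n ≤ V ∧ V ≤ ((d + 1) * s) ^ n := by
  obtain ⟨Z, hZ0, rfl⟩ : ∃ Z : ℝ, 0 ≤ Z ∧ Z ^ n = V :=
    ⟨V ^ (n : ℝ)⁻¹, by positivity, Real.rpow_inv_natCast_pow hV hn⟩
  have floor_le : ⌊Z / s⌋₊ * s ≤ Z := (le_div_iff₀ hs).1 (Nat.floor_le (by positivity))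
  have le_floor_add_one : Z ≤ (⌊Z / s⌋₊ + 1) * s := (div_le_iff₀ hs).1 (Nat.lt_floor_add_one _).le
  exact ⟨⌊Z / s⌋₊, by gcongr, by gcongr⟩

lemma volume_real_pow_mul_le (hv : ∀ j b, ‖v j b‖ ≤ 1) (hn : n ≠ 0) (hθ : 0 < θ)
    (hdet : ∀ a : ∀ j, κ j, θ ≤ |(Matrix.of fun i j => v j (a j) i).det|)
    (hC : ∀ a, IsCompact (C a)) (hdisj : Pairwise (Disjoint on C))
    (hCyl : ∀ a, ∀ x ∈ C a, ∀ j, ∃ τ : ℝ, ‖x - (p j (a j) + τ • v j (a j))‖ ≤ 2) :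
    volume.real (⋃ a, C a) ^ n ≤
      128 * (32 * n ^ 2 * 8 ^ n) ^ n * θ⁻¹ * (∏ j, (Fintype.card (κ j) : ℝ)) *
        volume.real (⋃ a, C a) := by
  have union_compact : IsCompact (⋃ a, C a) := isCompact_iUnion hC
  have union_finite : volume (⋃ a, C a) ≠ ∞ := union_compact.measure_lt_top.ne
  rcases eq_or_ne (volume (⋃ a, C a)) 0 with h0 | h0
  · simp [Measure.real, h0, hn]
  obtain ⟨x, hx⟩ := nonempty_of_measure_ne_zero h0
  obtain ⟨a, -⟩ := Set.mem_iUnion.1 hx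
  have (j : Fin n) : Nonempty (κ j) := ⟨a j⟩
  obtain ⟨r, ⟨hr0, hr1⟩, thickening_disjoint, thickening_le⟩ :=
    exists_cthickening_disjoint_measure_le hC hdisj h0
  set m := volume.real (⋃ a, C a)
  set N := ∏ j, (Fintype.card (κ j) : ℝ)
  set W := Metric.cthickening r (⋃ a, C a)
  have hW_compact : IsCompact W := union_compact.cthickening
  have hW0 : volume W ≠ 0 := fun h => h0 <|
    measure_mono_null (Metric.self_subset_cthickening _) h
  have hW_le : volume.real W ≤ 2 * m := by
    simpa [m, Measure.real] using
      ENNReal.toReal_mono (ENNReal.mul_ne_top (by simp) union_finite) thickening_le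
  set s := r / n
  have hs : 0 < s := by positivity
  have n_mul_s : n * s = r := mul_div_cancel₀ r (Nat.cast_ne_zero.2 hn)
  obtain ⟨d, degree_le, le_degree⟩ :=
    exists_nat_mul_pow_le_le_succ_mul_pow hn (V := 128 * m * N / θ) (by positivity) hs
  have degree_large : 64 * volume.real W * N ≤ ((d + 1) * s) ^ n * θ := by
    calc 64 * volume.real W * N ≤ 64 * (2 * m) * N := by gcongr
      _ = 128 * m * N := by ring
      _ ≤ ((d + 1) * s) ^ n * θ := (div_le_iff₀ hθ).1 le_degree
  have sum_le := sum_volume_le_of_le_pow_mul hv hs.le n_mul_s.le hr1.le hdet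
    (fun a => (hC a).measurableSet) thickening_disjoint hCyl hW_compact.measurableSet hW0
    hW_compact.measure_lt_top.ne
    (fun a => Metric.cthickening_subset_of_subset r (Set.subset_iUnion C a)) degree_large
  have m_le : m ≤ 32 * n ^ 2 * 8 ^ n * (d * s) :=
    ENNReal.toReal_le_of_le_ofReal (by positivity)
      ((measure_iUnion_fintype_le volume C).trans sum_le)
  calc m ^ n ≤ (32 * n ^ 2 * 8 ^ n * (d * s)) ^ n := by gcongr
    _ = (32 * n ^ 2 * 8 ^ n) ^ n * (d * s) ^ n := mul_pow _ _ _
    _ ≤ (32 * n ^ 2 * 8 ^ n) ^ n * (128 * m * N / θ) := by gcongr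
    _ = _ := by ring

lemma le_rpow_of_pow_le_mul (hn : 2 ≤ n) {m b : ℝ} (hm : 0 < m) (h : m ^ n ≤ b * m) :
    m ≤ b ^ (1 / ((n : ℝ) - 1)) := by
  have hn' : (0 : ℝ) < n - 1 := by
    have : (2 : ℝ) ≤ n := by exact_mod_cast hn
    linarith
  have hb : m ^ ((n : ℝ) - 1) ≤ b := by
    rwa [Real.rpow_sub_one hm.ne', Real.rpow_natCast, div_le_iff₀ hm]
  have hb0 : 0 ≤ b := (by positivity : 0 ≤ m ^ ((n : ℝ) - 1)).trans hb
  rw [one_div]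
  exact (Real.le_rpow_inv_iff_of_pos hm.le hb0 hn').2 hb

lemma volume_iUnion_le_of_transverse (hn : 2 ≤ n) (hv : ∀ j b, ‖v j b‖ ≤ 1) (hθ : 0 < θ)
    (hdet : ∀ a : ∀ j, κ j, θ ≤ |(Matrix.of fun i j => v j (a j) i).det|)
    {S : (∀ j, κ j) → Set (Fin n → ℝ)} (hS : ∀ a, MeasurableSet (S a))
    (hCyl : ∀ a, ∀ x ∈ S a, ∀ j, ∃ τ : ℝ, ‖x - (p j (a j) + τ • v j (a j))‖ ≤ 2) :
    volume (⋃ a, S a) ≤ ENNReal.ofReal ((128 * (32 * n ^ 2 * 8 ^ n) ^ n * θ⁻¹ *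
      ∏ j, (Fintype.card (κ j) : ℝ)) ^ (1 / ((n : ℝ) - 1))) := by
  refine measure_iUnion_le_of_forall_isCompact hS fun C hC hCS hdisj => ?_
  have union_finite : volume (⋃ a, C a) ≠ ∞ := (isCompact_iUnion hC).measure_lt_top.ne
  rcases eq_or_ne (volume (⋃ a, C a)) 0 with h0 | h0
  · simp [h0]
  rw [← ofReal_measureReal union_finite]
  exact ENNReal.ofReal_le_ofReal <| le_rpow_of_pow_le_mul hn (ENNReal.toReal_pos h0 union_finite) <|
    volume_real_pow_mul_le hv (by lia) hθ hdet hC hdisj fun a x hx => hCyl a x (hCS a hx)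

end TransverseFamilies

section Cylinders

variable {n : ℕ}

lemma isClosed_cylinder (p v : EuclideanSpace ℝ (Fin n)) (r : ℝ) : IsClosed (cylinder p v r) :=
  isClosed_le (Metric.continuous_infDist_pt _) continuous_const

lemma norm_ofLp_le (x : EuclideanSpace ℝ (Fin n)) : ‖x.ofLp‖ ≤ ‖x‖ :=
  (pi_norm_le_iff_of_nonneg (norm_nonneg x)).2 fun i => PiLp.norm_apply_le x i

lemma exists_norm_sub_le_of_mem_cylinder {p v x : EuclideanSpace ℝ (Fin n)} {r r' : ℝ}
    (hr : r < r') (hx : x ∈ cylinder p v r) :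
    ∃ t : ℝ, ‖x.ofLp - (p.ofLp + t • v.ofLp)‖ ≤ r' := by
  have axis_nonempty : {y | ∃ t : ℝ, y = p + t • v}.Nonempty := ⟨p, 0, by simp⟩
  have infDist_lt : Metric.infDist x {y | ∃ t : ℝ, y = p + t • v} < r' := lt_of_le_of_lt hx hr
  obtain ⟨_, ⟨t, rfl⟩, ht⟩ := (Metric.infDist_lt_iff axis_nonempty).1 infDist_lt
  rw [dist_eq_norm] at ht
  exact ⟨t, (norm_ofLp_le _).trans ht.le⟩

end Cylinders

/-- Transverse families of unit cylinders: the set `I` of points belonging to at least one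
cylinder `T_{j,a}` for every `j` satisfies `Vol(I) ≤ C(n) θ^{-1/(n-1)} ∏_j A(j)^{1/(n-1)}`. -/
theorem kakeya_transverse_intersection (n : ℕ) (hn : 2 ≤ n) :
    ∃ C : ℝ, 0 < C ∧
      ∀ (A : Fin n → ℕ) (p v : ∀ j : Fin n, Fin (A j) → EuclideanSpace ℝ (Fin n)) (θ : ℝ),
        0 < θ →
        (∀ j a, ‖v j a‖ = 1) →
        (∀ a : ∀ j : Fin n, Fin (A j),
          θ ≤ |Matrix.det (Matrix.of fun i j : Fin n => v j (a j) i)|) →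
        volume (⋂ j : Fin n, ⋃ a : Fin (A j), cylinder (p j a) (v j a) 1)
          ≤ ENNReal.ofReal (C * θ ^ (-(1:ℝ) / ((n:ℝ) - 1)) *
              ∏ j : Fin n, (A j : ℝ) ^ ((1:ℝ) / ((n:ℝ) - 1))) := by
  refine ⟨(128 * (32 * n ^ 2 * 8 ^ n) ^ n) ^ (1 / ((n : ℝ) - 1)), by positivity,
    fun A p v θ hθ hv hdet => ?_⟩
  have pieces_closed (a : ∀ j, Fin (A j)) : IsClosed (⋂ j, cylinder (p j (a j)) (v j (a j)) 1) :=
    isClosed_iInter fun j => isClosed_cylinder _ _ _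
  have iInter_iUnion_eq : ⋂ j, ⋃ a, cylinder (p j a) (v j a) 1 =
      ⋃ a : ∀ j, Fin (A j), ⋂ j, cylinder (p j (a j)) (v j (a j)) 1 := iInf_iSup_eq
  rw [iInter_iUnion_eq, ← (PiLp.volume_preserving_toLp (Fin n)).measure_preimage
    (MeasurableSet.iUnion fun a => (pieces_closed a).measurableSet).nullMeasurableSet,
    Set.preimage_iUnion]
  refine (volume_iUnion_le_of_transverse hn (p := fun j a => (p j a).ofLp)
    (fun j a => (norm_ofLp_le (v j a)).trans (hv j a).le) hθ hdet
    (fun a => ((pieces_closed a).preimage (PiLp.continuous_toLp 2 _)).measurableSet)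
    fun a x hx j => exists_norm_sub_le_of_mem_cylinder one_lt_two
      (Set.mem_iInter.1 (Set.mem_preimage.1 hx) j)).trans_eq ?_
  simp only [Fintype.card_fin]
  rw [Real.mul_rpow (by positivity) (by positivity), Real.mul_rpow (by positivity) (by positivity),
    Real.inv_rpow hθ.le, neg_div, Real.rpow_neg hθ.le,
    Real.finsetProd_rpow _ _ fun j _ => Nat.cast_nonneg _]
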